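/- Let W be a classical–quantum channel from a finite alphabet X with |X| = a into the density operators on ℂ^d. For every λ ∈ (0,1) there exists a constant K (depending only on λ, a and d) such that for all positive integers n, |log₂ N(n,λ) − n·C(W)| ≤ K·√n, where N(n,λ) is the maximal size of an (n,λ)-code for W and C(W) = max_P I(P;W) is the channel capacity. -/

import Mathlib

open Matrix BigOperators Finset
open scoped Classical ComplexOrder

noncomputable section

/-- Square complex matrices of size `d` (operators on `ℂ^d`). -/
abbrev Mat (d : ℕ) := Matrix (Fin d) (Fin d) ℂ

/-- Operators on the `n`-fold tensor power `(ℂ^d)^{⊗n}`, indexed by `Fin n → Fin d`. -/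
abbrev MatPow (d n : ℕ) := Matrix (Fin n → Fin d) (Fin n → Fin d) ℂ

/-- Tensor product `A 0 ⊗ A 1 ⊗ ⋯ ⊗ A (n-1)` of a family of `d × d` matrices. -/
def tensorPow {d n : ℕ} (A : Fin n → Mat d) : MatPow d n :=
  Matrix.of fun j k => ∏ i, A i (j i) (k i)

/-- Exponential to base 2. -/
def exp2 (t : ℝ) : ℝ := (2 : ℝ) ^ t

/-- `P` is a probability distribution on the finite set `X`. -/
def IsProbDist {X : Type*} [Fintype X] (P : X → ℝ) : Prop :=
  (∀ x, 0 ≤ P x) ∧ ∑ x, P x = 1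

/-- `ρ` is a density operator (a state): positive semidefinite with trace one. -/
def IsState {ι : Type*} [Fintype ι] [DecidableEq ι] (ρ : Matrix ι ι ℂ) : Prop :=
  ρ.PosSemidef ∧ ρ.trace = 1

/-- `N(x|x^n)`: number of occurrences of the letter `x` in the sequence `xs`. -/
def countIn {X : Type*} {n : ℕ} (x : X) (xs : Fin n → X) : ℕ :=
  (Finset.univ.filter fun i => xs i = x).card

/-- The variance-typical set `T^n_{P,δ}`. -/
def typicalSet {X : Type*} [Fintype X] (n : ℕ) (P : X → ℝ) (δ : ℝ) :
    Finset (Fin n → X) :=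
  Finset.univ.filter fun xs => ∀ x : X,
    |(countIn x xs : ℝ) - n * P x| ≤ δ * Real.sqrt n * Real.sqrt (P x * (1 - P x))

/-- Product (i.i.d.) probability `P^{⊗n}(A)` of a set `A` of sequences. -/
def prodProb {X : Type*} [Fintype X] {n : ℕ} (P : X → ℝ) (A : Finset (Fin n → X)) : ℝ :=
  ∑ xs ∈ A, ∏ i, P (xs i)

/-- Shannon entropy to base 2. -/
def shannonEntropy {X : Type*} [Fintype X] (P : X → ℝ) : ℝ :=
  -∑ x, P x * Real.logb 2 (P x)

/-- von Neumann entropy to base 2, `H(ρ) = -Tr(ρ log₂ ρ)`, via the eigenvalues. -/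
def vnEntropy {d : ℕ} (ρ : Mat d) : ℝ :=
  if h : ρ.IsHermitian then -∑ i, h.eigenvalues i * Real.logb 2 (h.eigenvalues i) else 0

/-- The constant `K = 2 log₂(e) / e`. -/
def Kconst : ℝ := 2 * Real.logb 2 (Real.exp 1) / Real.exp 1

/-- A diagonalization `ρ = Σ_j R j • π j` into one-dimensional mutually orthogonal
eigenprojectors, with eigenvalue list `R` a probability distribution. -/
def IsDiagonalization {d : ℕ} (ρ : Mat d) (R : Fin d → ℝ) (π : Fin d → Mat d) : Prop :=
  (∀ j, (π j).PosSemidef) ∧ (∀ j, π j * π j = π j) ∧ (∀ j, (π j).trace = 1) ∧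
    (∀ j k, j ≠ k → π j * π k = 0) ∧ (∑ j, π j = 1) ∧
    ρ = ∑ j, (R j : ℂ) • π j ∧ IsProbDist R

/-- The variance-typical projector `Π^n_{ρ,δ}` of a state with fixed diagonalization
`(R, π)`. -/
def typicalProj {d : ℕ} (n : ℕ) (R : Fin d → ℝ) (π : Fin d → Mat d) (δ : ℝ) : MatPow d n :=
  ∑ js ∈ typicalSet n R δ, tensorPow fun i => π (js i)

/-- `B` is an `η`-shadow of the state `σ`: `0 ≤ B ≤ 1` and `Tr(σB) ≥ η`. -/
def IsShadow {ι : Type*} [Fintype ι] [DecidableEq ι] (σ B : Matrix ι ι ℂ) (η : ℝ) : Prop :=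
  B.PosSemidef ∧ ((1 : Matrix ι ι ℂ) - B).PosSemidef ∧ η ≤ (Matrix.trace (σ * B)).re

/-- Average state `PW = Σ_x P(x) W_x` of a cq-channel under input distribution `P`. -/
def avgState {X : Type*} [Fintype X] {d : ℕ} (P : X → ℝ) (W : X → Mat d) : Mat d :=
  ∑ x, (P x : ℂ) • W x

/-- Conditional von Neumann entropy `H(W|P) = Σ_x P(x) H(W_x)`. -/
def condEntropy {X : Type*} [Fintype X] {d : ℕ} (P : X → ℝ) (W : X → Mat d) : ℝ :=
  ∑ x, P x * vnEntropy (W x)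

/-- Mutual information `I(P;W) = H(PW) − H(W|P)`. -/
def mutualInfo {X : Type*} [Fintype X] {d : ℕ} (P : X → ℝ) (W : X → Mat d) : ℝ :=
  vnEntropy (avgState P W) - condEntropy P W

/-- Capacity `C(W) = max_P I(P;W)`. -/
def capacity {X : Type*} [Fintype X] {d : ℕ} (W : X → Mat d) : ℝ :=
  sSup {c | ∃ P : X → ℝ, IsProbDist P ∧ c = mutualInfo P W}

/-- `(f, D)` (with message set `M` inside the outcome index set `M'`) is an
`(n,λ)`-code for the cq-channel `W`: the `D m` are positive semidefinite, sum to the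
identity, and each message is decoded correctly with probability at least `1 - λ`. -/
def IsCode {X : Type*} [Fintype X] {d n : ℕ} (W : X → Mat d) (lam : ℝ)
    {M' : Type*} [Fintype M'] (M : Finset M') (f : M' → Fin n → X)
    (D : M' → MatPow d n) : Prop :=
  (∀ m, (D m).PosSemidef) ∧ (∑ m, D m = 1) ∧
    ∀ m ∈ M, 1 - lam ≤ (Matrix.trace (tensorPow (fun i => W (f m i)) * D m)).re

/-- `N(n,λ)`: maximal size of an `(n,λ)`-code for `W`. -/
def maxCodeSize {X : Type*} [Fintype X] (d : ℕ) (W : X → Mat d) (n : ℕ) (lam : ℝ) : ℕ :=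
  sSup {k | ∃ (M' : Type) (_ : Fintype M') (M : Finset M') (f : M' → Fin n → X)
    (D : M' → MatPow d n), IsCode W lam M f D ∧ M.card = k}

/-- Trace norm `‖A‖₁ = Tr|A|`: the sum of the singular values. -/
def traceNorm {ι : Type*} [Fintype ι] [DecidableEq ι] (A : Matrix ι ι ℂ) : ℝ :=
  ∑ i, Real.sqrt ((Matrix.posSemidef_conjTranspose_mul_self A).1.eigenvalues i)

/-- Trace distance `D(ρ,σ) = ½‖ρ−σ‖₁`. -/
def traceDist {ι : Type*} [Fintype ι] [DecidableEq ι] (ρ σ : Matrix ι ι ℂ) : ℝ :=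
  traceNorm (ρ - σ) / 2

/-- (Pure-state) fidelity `F(ρ,σ) = Tr(ρσ)`. -/
def fidelity {ι : Type*} [Fintype ι] [DecidableEq ι] (ρ σ : Matrix ι ι ℂ) : ℝ :=
  (Matrix.trace (ρ * σ)).re

/-- A pure state: the rank-one orthogonal projector `|ψ⟩⟨ψ|` onto the span of a
unit vector `ψ`. -/
def IsPureState {ι : Type*} [Fintype ι] (ρ : Matrix ι ι ℂ) : Prop :=
  ∃ ψ : ι → ℂ, (∑ i, star (ψ i) * ψ i) = 1 ∧ ρ = Matrix.vecMulVec ψ (star ψ)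

/-- The set of eigenvalue-index sequences `js` that are variance-typical, with
constant `δ`, for the distribution `q x` on each block `I_x = {i : xs i = x}`. -/
def condTypicalSet {X : Type*} [Fintype X] {n d : ℕ} (xs : Fin n → X)
    (q : X → Fin d → ℝ) (δ : ℝ) : Finset (Fin n → Fin d) :=
  Finset.univ.filter fun js => ∀ (x : X) (k : Fin d),
    |((Finset.univ.filter fun i => xs i = x ∧ js i = k).card : ℝ) - (countIn x xs : ℝ) * q x k|
      ≤ δ * Real.sqrt (countIn x xs) * Real.sqrt (q x k * (1 - q x k))

/-- Conditional variance-typical projector `Π^n_{W,δ}(x^n) = ⊗_{x∈X} Π^{I_x}_{W_x,δ}`,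
with respect to fixed diagonalizations `W_x = Σ_j (q x j) • (π x j)`. -/
def condTypicalProj {X : Type*} [Fintype X] {d : ℕ} {n : ℕ} (xs : Fin n → X)
    (q : X → Fin d → ℝ) (π : X → Fin d → Mat d) (δ : ℝ) : MatPow d n :=
  ∑ js ∈ condTypicalSet xs q δ, tensorPow fun i => π (xs i) (js i)

/-! ### Chebyshev inequality for finite product distributions -/

lemma sum_prod_eq {R : Type*} [CommSemiring R] {Ω : Type*} [Fintype Ω] {n : ℕ}
    (g : Fin n → Ω → R) :
    ∑ ω : Fin n → Ω, ∏ k, g k (ω k) = ∏ k, ∑ o, g k o := by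
  rw [Finset.prod_univ_sum, Fintype.piFinset_univ]

lemma sum_prod_one {Ω : Type*} [Fintype Ω] {n : ℕ} (p : Fin n → Ω → ℝ)
    (hs : ∀ k, ∑ o, p k o = 1) : ∑ ω : Fin n → Ω, ∏ k, p k (ω k) = 1 := by
  rw [sum_prod_eq]; simp [hs]

lemma sum_prod_single {Ω : Type*} [Fintype Ω] {n : ℕ} (p : Fin n → Ω → ℝ)
    (hs : ∀ k, ∑ o, p k o = 1) (a : Fin n) (f : Ω → ℝ) :
    ∑ ω : Fin n → Ω, (∏ k, p k (ω k)) * f (ω a) = ∑ o, p a o * f o := by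
  have h : ∀ ω : Fin n → Ω, (∏ k, p k (ω k)) * f (ω a)
      = ∏ k, (p k (ω k) * if k = a then f (ω k) else 1) := by
    intro ω
    rw [Finset.prod_mul_distrib, Finset.prod_ite_eq' Finset.univ a (fun k => f (ω k))]
    simp
  simp_rw [h]
  rw [sum_prod_eq (fun k o => p k o * if k = a then f o else 1)]
  rw [Finset.prod_eq_single a]
  · simp
  · intro b _ hb
    simp [hb, hs]
  · simp

lemma sum_prod_pair {Ω : Type*} [Fintype Ω] {n : ℕ} (p : Fin n → Ω → ℝ)
    (f : Fin n → Ω → ℝ) (h0 : ∀ k, ∑ o, p k o * f k o = 0) (a b : Fin n) (hab : a ≠ b) :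
    ∑ ω : Fin n → Ω, (∏ k, p k (ω k)) * (f a (ω a) * f b (ω b)) = 0 := by
  have h : ∀ ω : Fin n → Ω, (∏ k, p k (ω k)) * (f a (ω a) * f b (ω b))
      = ∏ k, (p k (ω k) * ((if k = a then f k (ω k) else 1) * if k = b then f k (ω k) else 1)) := by
    intro ω
    rw [Finset.prod_mul_distrib, Finset.prod_mul_distrib,
      Finset.prod_ite_eq' Finset.univ a (fun k => f k (ω k)),
      Finset.prod_ite_eq' Finset.univ b (fun k => f k (ω k))]
    simp
  simp_rw [h]
  rw [sum_prod_eq (fun k o => p k o * ((if k = a then f k o else 1) * if k = b then f k o else 1))]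
  apply Finset.prod_eq_zero (Finset.mem_univ a)
  simp [hab, h0]

lemma second_moment {Ω : Type*} [Fintype Ω] {n : ℕ} (p : Fin n → Ω → ℝ)
    (hs : ∀ k, ∑ o, p k o = 1)
    (f : Fin n → Ω → ℝ) (h0 : ∀ k, ∑ o, p k o * f k o = 0) :
    ∑ ω : Fin n → Ω, (∏ k, p k (ω k)) * (∑ k, f k (ω k)) ^ 2
      = ∑ k, ∑ o, p k o * (f k o) ^ 2 := by
  have h : ∀ ω : Fin n → Ω, (∏ k, p k (ω k)) * (∑ k, f k (ω k)) ^ 2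
      = ∑ a, ∑ b, (∏ k, p k (ω k)) * (f a (ω a) * f b (ω b)) := by
    intro ω
    rw [sq, Finset.sum_mul_sum, Finset.mul_sum]
    refine Finset.sum_congr rfl fun a _ => ?_
    rw [Finset.mul_sum]
  simp_rw [h]
  rw [Finset.sum_comm]
  refine Finset.sum_congr rfl fun a _ => ?_
  rw [Finset.sum_comm, Finset.sum_eq_single a]
  · rw [← sum_prod_single p hs a (fun o => (f a o) ^ 2)]
    refine Finset.sum_congr rfl fun ω _ => ?_
    ring
  · intro b _ hb
    exact sum_prod_pair p f h0 a b (Ne.symm hb)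
  · simp

lemma cheb {Ω : Type*} [Fintype Ω] {n : ℕ} (p : Fin n → Ω → ℝ)
    (hp : ∀ k o, 0 ≤ p k o) (hs : ∀ k, ∑ o, p k o = 1) (Z : Fin n → Ω → ℝ) (c V : ℝ)
    (hc : 0 < c) (hV : ∑ k, ∑ o, p k o * (Z k o) ^ 2 ≤ V) :
    ∑ ω ∈ Finset.univ.filter (fun ω : Fin n → Ω =>
      (∑ k, ∑ o, p k o * Z k o) + c < ∑ k, Z k (ω k)), ∏ k, p k (ω k) ≤ V / c ^ 2 := by
  set μ : Fin n → ℝ := fun k => ∑ o, p k o * Z k o with hμ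
  set f : Fin n → Ω → ℝ := fun k o => Z k o - μ k with hf
  have h0 : ∀ k, ∑ o, p k o * f k o = 0 := by
    intro k
    simp only [hf, mul_sub, Finset.sum_sub_distrib, ← Finset.sum_mul, hs]
    simp [hμ]
  have hvar : ∀ k, ∑ o, p k o * (f k o) ^ 2 ≤ ∑ o, p k o * (Z k o) ^ 2 := by
    intro k
    have : ∑ o, p k o * (f k o) ^ 2 = ∑ o, p k o * (Z k o) ^ 2 - (μ k) ^ 2 := by
      have e : ∀ o, p k o * (f k o) ^ 2
          = p k o * (Z k o) ^ 2 - 2 * μ k * (p k o * Z k o) + p k o * (μ k) ^ 2 := by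
        intro o; simp only [hf]; ring
      simp_rw [e]
      rw [Finset.sum_add_distrib, Finset.sum_sub_distrib, ← Finset.mul_sum, ← Finset.sum_mul, hs]
      change _ - 2 * μ k * μ k + _ = _
      ring
    rw [this]; nlinarith [sq_nonneg (μ k)]
  have hpp : ∀ ω : Fin n → Ω, 0 ≤ ∏ k, p k (ω k) := fun ω =>
    Finset.prod_nonneg fun k _ => hp k _
  rw [le_div_iff₀ (by positivity), Finset.sum_mul]
  calc _ ≤ ∑ ω ∈ Finset.univ.filter (fun ω : Fin n → Ω =>
      (∑ k, μ k) + c < ∑ k, Z k (ω k)), (∏ k, p k (ω k)) * (∑ k, f k (ω k)) ^ 2 := by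
        refine Finset.sum_le_sum fun ω hω => ?_
        rw [Finset.mem_filter] at hω
        refine mul_le_mul_of_nonneg_left ?_ (hpp ω)
        have : c ≤ ∑ k, f k (ω k) := by
          simp only [hf, Finset.sum_sub_distrib]; linarith [hω.2]
        nlinarith
    _ ≤ ∑ ω : Fin n → Ω, (∏ k, p k (ω k)) * (∑ k, f k (ω k)) ^ 2 := by
        refine Finset.sum_le_sum_of_subset_of_nonneg (Finset.filter_subset _ _) ?_
        intro ω _ _
        exact mul_nonneg (hpp ω) (sq_nonneg _)
    _ = ∑ k, ∑ o, p k o * (f k o) ^ 2 := second_moment p hs f h0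
    _ ≤ _ := (Finset.sum_le_sum fun k _ => hvar k).trans hV

/-- Probability of any event implied by the no-deviation event. -/
lemma cheb_good {Ω : Type*} [Fintype Ω] {n : ℕ} (p : Fin n → Ω → ℝ)
    (hp : ∀ k o, 0 ≤ p k o) (hs : ∀ k, ∑ o, p k o = 1) (Z : Fin n → Ω → ℝ) (c V : ℝ)
    (hc : 0 < c) (hV : ∑ k, ∑ o, p k o * (Z k o) ^ 2 ≤ V) (Q : (Fin n → Ω) → Prop)
    (hQ : ∀ ω, (∀ k, 0 < p k (ω k)) →
      ∑ k, Z k (ω k) ≤ (∑ k, ∑ o, p k o * Z k o) + c → Q ω) :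
    1 - V / c ^ 2 ≤ ∑ ω, if Q ω then ∏ k, p k (ω k) else 0 := by
  have h1 := cheb p hp hs Z c V hc hV
  have h2 := sum_prod_one p hs
  rw [← Finset.sum_filter_add_sum_filter_not Finset.univ (fun ω : Fin n → Ω =>
      (∑ k, ∑ o, p k o * Z k o) + c < ∑ k, Z k (ω k))] at h2
  have hpp : ∀ ω : Fin n → Ω, 0 ≤ ∏ k, p k (ω k) := fun ω =>
    Finset.prod_nonneg fun k _ => hp k _
  have h3 : ∑ ω ∈ Finset.univ.filter (fun ω : Fin n → Ω =>
      ¬ ((∑ k, ∑ o, p k o * Z k o) + c < ∑ k, Z k (ω k))), ∏ k, p k (ω k)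
      ≤ ∑ ω, if Q ω then ∏ k, p k (ω k) else 0 := by
    rw [Finset.sum_filter]
    refine Finset.sum_le_sum fun ω _ => ?_
    by_cases hb : Q ω
    · rw [if_pos hb]
      split_ifs
      · exact hpp ω
      · exact le_rfl
    · rw [if_neg hb]
      split_ifs with ha
      · exact le_rfl
      · by_contra hcon
        apply hb
        refine hQ ω (fun k => ?_) (not_lt.mp ha)
        rcases (hp k (ω k)).lt_or_eq with h | h
        · exact h
        · exact absurd
            (Finset.prod_eq_zero (f := fun k => p k (ω k)) (Finset.mem_univ k) h.symm).le hcon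
  linarith

/-- Constant bounding `x (log₂ x)^2` on `[0,1]`. -/
def c0 : ℝ := 4 / (Real.log 2) ^ 2

lemma c0_pos : 0 < c0 := by
  have := Real.log_pos (show (1:ℝ) < 2 by norm_num)
  unfold c0; positivity

lemma mul_logb_sq_le (x : ℝ) (h0 : 0 ≤ x) (h1 : x ≤ 1) : x * (Real.logb 2 x) ^ 2 ≤ c0 := by
  rcases h0.eq_or_lt with h | h
  · rw [← h]; simp [c0_pos.le]
  have hl := Real.log_pos (show (1:ℝ) < 2 by norm_num)
  have h2 := Real.abs_log_mul_self_rpow_lt x (1/2) h h1 (by norm_num)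
  have h3 : (Real.log x * x ^ (1/2 : ℝ)) ^ 2 ≤ 4 := by
    rw [← sq_abs]
    have := abs_nonneg (Real.log x * x ^ (1/2 : ℝ))
    have h5 : |Real.log x * x ^ (1/2 : ℝ)| ≤ 2 := by
      refine h2.le.trans ?_; norm_num
    nlinarith
  rw [mul_pow, ← Real.sqrt_eq_rpow, Real.sq_sqrt h0] at h3
  unfold c0 Real.logb
  rw [div_pow, ← mul_div_assoc]
  gcongr
  linarith

/-! ### Matrix preliminaries -/

/-- `ρ` is diagonalized by the unitary `U` with real eigenvalue list `r`. -/
def DiagBy {ι : Type*} [Fintype ι] [DecidableEq ι] (ρ U : Matrix ι ι ℂ) (r : ι → ℝ) : Prop :=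
  U * Uᴴ = 1 ∧ Uᴴ * U = 1 ∧ ρ = U * diagonal (fun i => (r i : ℂ)) * Uᴴ

section mat
set_option linter.unusedSectionVars false
variable {ι : Type*} [Fintype ι] [DecidableEq ι]

lemma exists_diagBy (ρ : Matrix ι ι ℂ) (h : ρ.IsHermitian) :
    ∃ U, DiagBy ρ U h.eigenvalues := by
  refine ⟨(h.eigenvectorUnitary : Matrix ι ι ℂ), ?_, ?_, ?_⟩
  · exact Unitary.coe_mul_star_self h.eigenvectorUnitary
  · exact Unitary.coe_star_mul_self h.eigenvectorUnitary
  · conv_lhs => rw [h.spectral_theorem, Unitary.conjStarAlgAut_apply]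
    rfl

lemma DiagBy.trace {ρ U : Matrix ι ι ℂ} {r : ι → ℝ} (h : DiagBy ρ U r) :
    ρ.trace = ((∑ i, r i : ℝ) : ℂ) := by
  rw [h.2.2, Matrix.trace_mul_comm, ← Matrix.mul_assoc, h.2.1, Matrix.one_mul,
    Matrix.trace_diagonal]
  simp

lemma DiagBy.trace_mul {ρ U : Matrix ι ι ℂ} {r : ι → ℝ} (h : DiagBy ρ U r) (T : Matrix ι ι ℂ) :
    (ρ * T).trace.re = ∑ i, r i * ((Uᴴ * T * U) i i).re := by
  have : (ρ * T).trace = (diagonal (fun i => (r i : ℂ)) * (Uᴴ * T * U)).trace := by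
    rw [h.2.2]
    rw [show U * diagonal (fun i => (r i : ℂ)) * Uᴴ * T
      = U * (diagonal (fun i => (r i : ℂ)) * Uᴴ * T) by simp only [Matrix.mul_assoc]]
    rw [Matrix.trace_mul_comm]
    simp only [Matrix.mul_assoc]
  rw [this, Matrix.trace]
  simp [Matrix.diagonal_mul]

lemma psd_re {T : Matrix ι ι ℂ} (h : T.PosSemidef) (i : ι) : 0 ≤ (T i i).re :=
  (Complex.le_def.mp h.diag_nonneg).1

lemma trace_re_nonneg {T : Matrix ι ι ℂ} (h : T.PosSemidef) : 0 ≤ T.trace.re :=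
  (Complex.le_def.mp h.trace_nonneg).1

lemma trace_mul_re_nonneg {ρ T : Matrix ι ι ℂ} (hρ : ρ.PosSemidef) (h : T.PosSemidef) :
    0 ≤ (ρ * T).trace.re := by
  obtain ⟨U, hU⟩ := exists_diagBy ρ hρ.1
  rw [hU.trace_mul]
  exact Finset.sum_nonneg fun i _ => mul_nonneg (hρ.eigenvalues_nonneg i)
    (psd_re (h.conjTranspose_mul_mul_same U) i)

lemma trace_mul_mono {ρ S T : Matrix ι ι ℂ} (hρ : ρ.PosSemidef) (h : (T - S).PosSemidef) :
    (ρ * S).trace.re ≤ (ρ * T).trace.re := by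
  have := trace_mul_re_nonneg hρ h
  rw [Matrix.mul_sub, Matrix.trace_sub, Complex.sub_re] at this
  linarith

lemma DiagBy.posSemidef {ρ U : Matrix ι ι ℂ} {r : ι → ℝ} (h : DiagBy ρ U r) (hr : ∀ i, 0 ≤ r i) :
    ρ.PosSemidef := by
  rw [h.2.2]
  refine PosSemidef.mul_mul_conjTranspose_same (PosSemidef.diagonal ?_) U
  intro i
  simpa using hr i

/-- `T² ≤ T` for `0 ≤ T ≤ 1`. -/
lemma psd_sub_sq {T : Matrix ι ι ℂ} (h : T.PosSemidef) (h1 : (1 - T).PosSemidef) :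
    (T - T * T).PosSemidef := by
  have e : T - T * T = T * (1 - T) * Tᴴ + (1 - T) * T * (1 - T)ᴴ := by
    rw [h.1.eq, h1.1.eq]; noncomm_ring
  rw [e]
  exact (h1.mul_mul_conjTranspose_same T).add (h.mul_mul_conjTranspose_same (1 - T))

lemma sum_normSq_row (A : Matrix ι ι ℂ) (i : ι) :
    ∑ j, ‖A i j‖ ^ 2 = ((A * Aᴴ) i i).re := by
  rw [Matrix.mul_apply, Complex.re_sum]
  refine Finset.sum_congr rfl fun j _ => ?_
  rw [Matrix.conjTranspose_apply, Complex.star_def, Complex.mul_conj, Complex.ofReal_re,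
    Complex.normSq_eq_norm_sq]

lemma sum_normSq_col (A : Matrix ι ι ℂ) (j : ι) :
    ∑ i, ‖A i j‖ ^ 2 = ((Aᴴ * A) j j).re := by
  rw [Matrix.mul_apply, Complex.re_sum]
  refine Finset.sum_congr rfl fun i _ => ?_
  rw [Matrix.conjTranspose_apply, Complex.star_def, mul_comm, Complex.mul_conj, Complex.ofReal_re,
    Complex.normSq_eq_norm_sq]

lemma norm_add_sq_le (x y : ℂ) (t : ℝ) (ht : 0 < t) :
    ‖x + y‖ ^ 2 ≤ (1 + t) * ‖x‖ ^ 2 + (1 + 1 / t) * ‖y‖ ^ 2 := by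
  have h1 := norm_add_le x y
  have h2 : ‖x + y‖ ^ 2 ≤ (‖x‖ + ‖y‖) ^ 2 := by
    have := norm_nonneg (x + y); gcongr
  have h3 : 0 ≤ (t * ‖x‖ - ‖y‖) ^ 2 / t := by positivity
  have h4 : (t * ‖x‖ - ‖y‖) ^ 2 / t = t * ‖x‖ ^ 2 - 2 * ‖x‖ * ‖y‖ + 1 / t * ‖y‖ ^ 2 := by
    field_simp; ring
  nlinarith

/-- One-shot converse bound (Nussbaum–Szkoła type). -/
lemma oneshot_converse {ρ σ U V T : Matrix ι ι ℂ} {r s : ι → ℝ} (hρ : DiagBy ρ U r)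
    (hσ : DiagBy σ V s) (hr : ∀ i, 0 ≤ r i) (hs : ∀ i, 0 ≤ s i) (hT : T.PosSemidef)
    (hT1 : (1 - T).PosSemidef) (t L : ℝ) (ht : 0 < t) (hL : 0 < L) :
    ∑ i, ∑ j, (if r i ≤ L * s j then r i * ‖(Uᴴ * V) i j‖ ^ 2 else 0)
      ≤ (1 + t) * (ρ * (1 - T)).trace.re + (1 + 1 / t) * (L * (σ * T).trace.re) := by
  set A := Uᴴ * (1 - T) * V with hA
  set B := Uᴴ * T * V with hB
  have hG : Uᴴ * V = A + B := by rw [hA, hB]; noncomm_ring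
  have hAA : ∑ i, ∑ j, r i * ‖A i j‖ ^ 2 ≤ (ρ * (1 - T)).trace.re := by
    have h1 : ∑ i, ∑ j, r i * ‖A i j‖ ^ 2 = (ρ * ((1 - T) * (1 - T))).trace.re := by
      rw [hρ.trace_mul]
      refine Finset.sum_congr rfl fun i _ => ?_
      rw [← Finset.mul_sum, sum_normSq_row]
      have : A * Aᴴ = Uᴴ * ((1 - T) * (1 - T)) * U := by
        rw [hA, conjTranspose_mul, conjTranspose_mul, conjTranspose_conjTranspose, hT1.1.eq]
        calc _ = Uᴴ * (1 - T) * (V * Vᴴ) * ((1 - T) * U) := by simp only [Matrix.mul_assoc]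
          _ = _ := by rw [hσ.1, Matrix.mul_one]; simp only [Matrix.mul_assoc]
      rw [this]
    rw [h1]
    refine trace_mul_mono (hρ.posSemidef hr) (psd_sub_sq hT1 ?_)
    simpa using hT
  have hBB : ∑ i, ∑ j, s j * ‖B i j‖ ^ 2 ≤ (σ * T).trace.re := by
    have h1 : ∑ i, ∑ j, s j * ‖B i j‖ ^ 2 = (σ * (T * T)).trace.re := by
      rw [hσ.trace_mul, Finset.sum_comm]
      refine Finset.sum_congr rfl fun i _ => ?_
      rw [← Finset.mul_sum, sum_normSq_col]
      have : Bᴴ * B = Vᴴ * (T * T) * V := by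
        rw [hB, conjTranspose_mul, conjTranspose_mul, conjTranspose_conjTranspose, hT.1.eq]
        calc _ = Vᴴ * T * (U * Uᴴ) * (T * V) := by simp only [Matrix.mul_assoc]
          _ = _ := by rw [hρ.1, Matrix.mul_one]; simp only [Matrix.mul_assoc]
      rw [this]
    rw [h1]
    exact trace_mul_mono (hσ.posSemidef hs) (psd_sub_sq hT hT1)
  have key : ∑ i, ∑ j, (if r i ≤ L * s j then r i * ‖(Uᴴ * V) i j‖ ^ 2 else 0)
      ≤ (1 + t) * ∑ i, ∑ j, r i * ‖A i j‖ ^ 2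
        + (1 + 1 / t) * (L * ∑ i, ∑ j, s j * ‖B i j‖ ^ 2) := by
    simp only [Finset.mul_sum]
    simp only [← Finset.sum_add_distrib]
    refine Finset.sum_le_sum fun i _ => Finset.sum_le_sum fun j _ => ?_
    have ha : 0 ≤ r i * ‖A i j‖ ^ 2 := mul_nonneg (hr i) (sq_nonneg _)
    have hb : 0 ≤ s j * ‖B i j‖ ^ 2 := mul_nonneg (hs j) (sq_nonneg _)
    split_ifs with h
    · have h1 := norm_add_sq_le (A i j) (B i j) t ht
      rw [hG, Matrix.add_apply]
      have h2 := mul_le_mul_of_nonneg_left h1 (hr i)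
      have h3 : (1 + 1 / t) * (r i * ‖B i j‖ ^ 2) ≤ (1 + 1 / t) * (L * (s j * ‖B i j‖ ^ 2)) := by
        have : r i * ‖B i j‖ ^ 2 ≤ L * s j * ‖B i j‖ ^ 2 := by gcongr
        rw [← mul_assoc L]
        gcongr
      linarith
    · positivity
  refine key.trans ?_
  gcongr

/-- Projector onto eigenvalues at least `τ`. -/
lemma exists_spectral_proj {ρ U : Matrix ι ι ℂ} {r : ι → ℝ} (h : DiagBy ρ U r)
    (hr : ∀ i, 0 ≤ r i) (h1 : ∑ i, r i = 1) (τ : ℝ) (hτ : 0 < τ) :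
    ∃ Pr : Matrix ι ι ℂ, Pr.PosSemidef ∧ (1 - Pr).PosSemidef ∧ Pr.trace.re ≤ 1 / τ ∧
      (ρ * Pr).trace.re = ∑ i, if τ ≤ r i then r i else 0 := by
  set q : ι → ℝ := fun i => if τ ≤ r i then 1 else 0 with hq
  have hd : DiagBy (U * diagonal (fun i => (q i : ℂ)) * Uᴴ) U q := ⟨h.1, h.2.1, rfl⟩
  have hd' : DiagBy (1 - U * diagonal (fun i => (q i : ℂ)) * Uᴴ) U (fun i => 1 - q i) := by
    refine ⟨h.1, h.2.1, ?_⟩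
    have : diagonal (fun i => ((1 - q i : ℝ) : ℂ)) = 1 - diagonal (fun i => (q i : ℂ)) := by
      rw [← diagonal_one, diagonal_sub]; simp
    rw [this, Matrix.mul_sub, Matrix.sub_mul, Matrix.mul_one, h.1]
  refine ⟨_, hd.posSemidef ?_, hd'.posSemidef ?_, ?_, ?_⟩
  · intro i; simp only [hq]; split_ifs <;> norm_num
  · intro i; simp only [hq]; split_ifs <;> norm_num
  · rw [hd.trace, Complex.ofReal_re, le_div_iff₀ hτ, ← h1, Finset.sum_mul]
    refine Finset.sum_le_sum fun i _ => ?_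
    simp only [hq]; split_ifs with h2
    · simpa using h2
    · simpa using hr i
  · rw [h.trace_mul]
    refine Finset.sum_congr rfl fun i _ => ?_
    have : Uᴴ * (U * diagonal (fun i => (q i : ℂ)) * Uᴴ) * U = diagonal (fun i => (q i : ℂ)) := by
      calc _ = (Uᴴ * U) * diagonal (fun i => (q i : ℂ)) * (Uᴴ * U) := by
            simp only [Matrix.mul_assoc]
        _ = _ := by rw [h.2.1]; simp
    rw [this, diagonal_apply_eq, Complex.ofReal_re]
    simp only [hq]; split_ifs <;> simp

/-- Square root of `1 - B` with the gentle property `(1-S)² ≤ B`. -/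
lemma exists_sqrt {B : Matrix ι ι ℂ} (hB : B.PosSemidef) (hB1 : (1 - B).PosSemidef) :
    ∃ S : Matrix ι ι ℂ, Sᴴ = S ∧ S * S = 1 - B ∧ (B - (1 - S) * (1 - S)).PosSemidef := by
  obtain ⟨U, hU⟩ := exists_diagBy _ hB1.1
  set b := hB1.1.eigenvalues with hb
  have hb0 : ∀ i, 0 ≤ b i := hB1.eigenvalues_nonneg
  have e2 : ∀ f g : ι → ℝ, (U * diagonal (fun i => (f i : ℂ)) * Uᴴ) *
      (U * diagonal (fun i => (g i : ℂ)) * Uᴴ)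
      = U * diagonal (fun i => ((f i * g i : ℝ) : ℂ)) * Uᴴ := by
    intro f g
    calc _ = U * diagonal (fun i => (f i : ℂ)) * (Uᴴ * U) * diagonal (fun i => (g i : ℂ)) * Uᴴ := by
          simp only [Matrix.mul_assoc]
      _ = _ := by
        rw [hU.2.1, Matrix.mul_one, Matrix.mul_assoc U, diagonal_mul_diagonal]; simp
  have e1 : ∀ f : ι → ℝ, 1 - (U * diagonal (fun i => (f i : ℂ)) * Uᴴ)
      = U * diagonal (fun i => ((1 - f i : ℝ) : ℂ)) * Uᴴ := by
    intro f
    have : diagonal (fun i => ((1 - f i : ℝ) : ℂ)) = 1 - diagonal (fun i => (f i : ℂ)) := by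
      rw [← diagonal_one, diagonal_sub]; simp
    rw [this, Matrix.mul_sub, Matrix.sub_mul, Matrix.mul_one, hU.1]
  have hbB : B = U * diagonal (fun i => ((1 - b i : ℝ) : ℂ)) * Uᴴ := by
    rw [← e1 b, ← hU.2.2]; simp
  have hb1 : ∀ i, b i ≤ 1 := by
    intro i
    have h1 := psd_re (hB.conjTranspose_mul_mul_same U) i
    have : Uᴴ * B * U = diagonal (fun i => ((1 - b i : ℝ) : ℂ)) := by
      rw [hbB]
      calc _ = (Uᴴ * U) * diagonal (fun i => ((1 - b i : ℝ) : ℂ)) * (Uᴴ * U) := by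
            simp only [Matrix.mul_assoc]
        _ = _ := by rw [hU.2.1]; simp
    rw [this, diagonal_apply_eq, Complex.ofReal_re] at h1
    linarith
  refine ⟨U * diagonal (fun i => ((Real.sqrt (b i) : ℝ) : ℂ)) * Uᴴ, ?_, ?_, ?_⟩
  · rw [conjTranspose_mul, conjTranspose_mul, conjTranspose_conjTranspose,
      diagonal_conjTranspose, Matrix.mul_assoc]
    congr 3
    funext i
    simp
  · rw [e2, hU.2.2]
    congr 3
    funext i
    rw [Real.mul_self_sqrt (hb0 i)]
  · rw [e1, e2]
    have : DiagBy (B - U * diagonal (fun i => (((1 - Real.sqrt (b i)) * (1 - Real.sqrt (b i)) : ℝ) : ℂ))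
        * Uᴴ) U (fun i => (1 - b i) - (1 - Real.sqrt (b i)) * (1 - Real.sqrt (b i))) := by
      refine ⟨hU.1, hU.2.1, ?_⟩
      conv_lhs => rw [hbB]
      rw [← Matrix.sub_mul, ← Matrix.mul_sub, diagonal_sub]
      congr 3
      funext i
      simp
    refine this.posSemidef fun i => ?_
    have h1 := Real.mul_self_sqrt (hb0 i)
    have h2 := Real.sqrt_nonneg (b i)
    have h3 : Real.sqrt (b i) ≤ 1 := Real.sqrt_le_one.mpr (hb1 i)
    nlinarith

/-- Gentle-measurement step. -/
lemma gentle {ρ B S Pr : Matrix ι ι ℂ} (hρ : ρ.PosSemidef) (hS : Sᴴ = S)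
    (hSB : (B - (1 - S) * (1 - S)).PosSemidef) (hP : Pr.PosSemidef) (hP1 : (1 - Pr).PosSemidef)
    (t : ℝ) (ht : 0 < t) :
    (ρ * Pr).trace.re ≤ (1 + t) * (ρ * (S * Pr * S)).trace.re
      + (1 + 1 / t) * (ρ * B).trace.re := by
  have htc : (t : ℂ) ≠ 0 := by exact_mod_cast ht.ne'
  have h1 : (((1 + t : ℝ) : ℂ) • (S * Pr * S) +
      ((1 + 1 / t : ℝ) : ℂ) • ((1 - S) * Pr * (1 - S)) - Pr).PosSemidef := by
    set Y : Matrix ι ι ℂ := S - ((1 / t : ℝ) : ℂ) • (1 - S) with hY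
    have hYH : Yᴴ = Y := by
      simp [hY, conjTranspose_smul, hS]
    have h2 := (hP.mul_mul_conjTranspose_same Y).smul (a := (t : ℂ)) (by exact_mod_cast ht.le)
    have h3 : (t : ℂ) • (Y * Pr * Yᴴ) = ((1 + t : ℝ) : ℂ) • (S * Pr * S) +
      ((1 + 1 / t : ℝ) : ℂ) • ((1 - S) * Pr * (1 - S)) - Pr := by
      rw [hYH, hY]
      have h4 : Pr = S * Pr * S + S * Pr * (1 - S) + (1 - S) * Pr * S + (1 - S) * Pr * (1 - S) := by
        noncomm_ring
      refine Eq.trans ?_ (congrArg (fun Q => ((1 + t : ℝ) : ℂ) • (S * Pr * S) +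
        ((1 + 1 / t : ℝ) : ℂ) • ((1 - S) * Pr * (1 - S)) - Q) h4.symm)
      generalize 1 - S = R
      have : (S - ((1 / t : ℝ) : ℂ) • R) * Pr * (S - ((1 / t : ℝ) : ℂ) • R)
        = S * Pr * S - ((1 / t : ℝ) : ℂ) • (S * Pr * R) - ((1 / t : ℝ) : ℂ) • (R * Pr * S)
          + (((1 / t : ℝ) : ℂ) * ((1 / t : ℝ) : ℂ)) • (R * Pr * R) := by
        simp only [Matrix.sub_mul, Matrix.mul_sub, Matrix.smul_mul, Matrix.mul_smul, smul_smul,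
          smul_sub]
        abel
      rw [this]
      push_cast
      clear h4 h2 hYH
      match_scalars <;> field_simp <;> ring
    rw [← h3]; exact h2
  have h2 : ((1 - S) * (1 - S) - (1 - S) * Pr * (1 - S)).PosSemidef := by
    have := hP1.mul_mul_conjTranspose_same (1 - S)
    rw [conjTranspose_sub, hS, conjTranspose_one] at this
    have e : (1 - S) * (1 - S) - (1 - S) * Pr * (1 - S) = (1 - S) * (1 - Pr) * (1 - S) := by
      noncomm_ring
    rw [e]
    exact this
  have a1 := trace_mul_re_nonneg hρ h1
  have a2 := trace_mul_mono hρ h2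
  have a3 := trace_mul_mono hρ hSB
  rw [Matrix.mul_sub, Matrix.mul_add, Matrix.trace_sub, Matrix.trace_add, Matrix.mul_smul,
    Matrix.mul_smul, Matrix.trace_smul, Matrix.trace_smul, Complex.sub_re, Complex.add_re,
    smul_eq_mul, smul_eq_mul, Complex.re_ofReal_mul, Complex.re_ofReal_mul] at a1
  have a4 : (1 + 1 / t) * (ρ * ((1 - S) * Pr * (1 - S))).trace.re
    ≤ (1 + 1 / t) * (ρ * B).trace.re := by
    have := a2.trans a3
    gcongr
  linarith

end mat

section ach
variable {ι : Type*} [Fintype ι] [DecidableEq ι]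

/-- Code conditions used in the greedy construction. -/
def GreedyCode {Y : Type*} (ρ : Y → Matrix ι ι ℂ) (lam R : ℝ) (k : ℕ) (f : Fin k → Y)
    (D : Fin k → Matrix ι ι ℂ) : Prop :=
  (∀ m, (D m).PosSemidef) ∧ (1 - ∑ m, D m).PosSemidef ∧
    (∀ m, 1 - lam ≤ (ρ (f m) * D m).trace.re) ∧ ∀ m, (D m).trace.re ≤ R

lemma DiagBy.sum_conj {ρ U : Matrix ι ι ℂ} {r : ι → ℝ} (h : DiagBy ρ U r) (T : Matrix ι ι ℂ) :
    ∑ i, ((Uᴴ * T * U) i i).re = T.trace.re := by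
  have : (Uᴴ * T * U).trace = T.trace := by
    rw [Matrix.trace_mul_comm, ← Matrix.mul_assoc, h.1, Matrix.one_mul]
  rw [← this, Matrix.trace, Complex.re_sum]
  rfl

lemma DiagBy.trace_mul_le {ρ U : Matrix ι ι ℂ} {r : ι → ℝ} (h : DiagBy ρ U r)
    (hr1 : ∀ i, r i ≤ 1) {T : Matrix ι ι ℂ} (hT : T.PosSemidef) :
    (ρ * T).trace.re ≤ T.trace.re := by
  rw [h.trace_mul, ← h.sum_conj]
  refine Finset.sum_le_sum fun i _ => ?_
  have := psd_re (hT.conjTranspose_mul_mul_same U) i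
  nlinarith [hr1 i]

lemma oneshot_ach {Y : Type*} [Fintype Y] (ρ : Y → Matrix ι ι ℂ) (U : Y → Matrix ι ι ℂ)
    (r : Y → ι → ℝ) (hρ : ∀ y, DiagBy (ρ y) (U y) (r y)) (hr : ∀ y i, 0 ≤ r y i)
    (hr1 : ∀ y, ∑ i, r y i = 1) (p : Y → ℝ) (hp : ∀ y, 0 ≤ p y) (hp1 : ∑ y, p y = 1)
    {σ V : Matrix ι ι ℂ} {s : ι → ℝ} (hσ : DiagBy σ V s) (hs : ∀ j, 0 ≤ s j)
    (hσp : σ = ∑ y, (p y : ℂ) • ρ y) (t τ θ lam : ℝ) (ht : 0 < t) (hτ : 0 < τ) (hθ : 0 < θ)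
    (hlam : lam < 1) :
    ∃ (k : ℕ) (f : Fin k → Y) (D : Fin k → Matrix ι ι ℂ), GreedyCode ρ lam (1 / τ) k f D ∧
      ∑ y, p y * (∑ i, if τ ≤ r y i then r y i else 0) ≤
        (1 + t) * (1 - lam) +
          (1 + 1 / t) * ((∑ j, if s j ≤ θ then 0 else s j) + θ * (k * (1 / τ))) := by
  have hrle : ∀ y i, r y i ≤ 1 := by
    intro y i
    rw [← hr1 y]
    exact Finset.single_le_sum (f := r y) (fun i _ => hr y i) (Finset.mem_univ i)
  have hmax : ∃ k : ℕ, (∃ f D, GreedyCode ρ lam (1 / τ) k f D) ∧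
      ¬ ∃ f D, GreedyCode ρ lam (1 / τ) (k + 1) f D := by
    by_contra hcon
    push Not at hcon
    have hall : ∀ k : ℕ, ∃ f D, GreedyCode ρ lam (1 / τ) k f D := by
      intro k
      induction k with
      | zero =>
        refine ⟨Fin.elim0, Fin.elim0, fun m => m.elim0, ?_, fun m => m.elim0, fun m => m.elim0⟩
        simpa using PosSemidef.one
      | succ k ih =>
        obtain ⟨f, D, h⟩ := ih
        exact hcon k ⟨f, D, h⟩
    obtain ⟨k, hk⟩ := exists_nat_gt ((Fintype.card ι : ℝ) / (1 - lam))
    obtain ⟨f, D, h1, h2, h3, h4⟩ := hall k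
    rw [div_lt_iff₀ (by linarith)] at hk
    have e1 : (k : ℝ) * (1 - lam) ≤ ∑ m, (D m).trace.re := by
      calc (k : ℝ) * (1 - lam) = ∑ _m : Fin k, (1 - lam) := by
            rw [Finset.sum_const, Finset.card_univ, Fintype.card_fin, nsmul_eq_mul]
        _ ≤ _ := Finset.sum_le_sum fun m _ =>
          (h3 m).trans ((hρ (f m)).trace_mul_le (hrle _) (h1 m))
    have e2 := trace_re_nonneg h2
    rw [Matrix.trace_sub, Matrix.trace_one, Complex.sub_re, Matrix.trace_sum, Complex.re_sum,
      Complex.natCast_re] at e2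
    linarith
  obtain ⟨k, ⟨f, D, hc⟩, hnot⟩ := hmax
  refine ⟨k, f, D, hc, ?_⟩
  obtain ⟨h1, h2, h3, h4⟩ := hc
  obtain ⟨B, hB⟩ : ∃ B, B = ∑ m, D m := ⟨_, rfl⟩
  rw [← hB] at h2
  have hBpsd : B.PosSemidef := hB ▸ posSemidef_sum _ fun m _ => h1 m
  obtain ⟨S, hS, hSS, hSB⟩ := exists_sqrt hBpsd h2
  have hy : ∀ y, (∑ i, if τ ≤ r y i then r y i else 0) ≤
      (1 + t) * (1 - lam) + (1 + 1 / t) * (ρ y * B).trace.re := by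
    intro y
    obtain ⟨Pr, hP, hP1, hPt, hPs⟩ := exists_spectral_proj (hρ y) (hr y) (hr1 y) τ hτ
    have hg := gentle ((hρ y).posSemidef (hr y)) hS hSB hP hP1 t ht
    have hD : (S * Pr * S).PosSemidef := by
      have := hP.mul_mul_conjTranspose_same S
      rwa [hS] at this
    have hlt : (ρ y * (S * Pr * S)).trace.re ≤ 1 - lam := by
      by_contra hge
      push Not at hge
      apply hnot
      refine ⟨Fin.snoc f y, Fin.snoc D (S * Pr * S), ?_, ?_, ?_, ?_⟩
      · intro m
        refine Fin.lastCases ?_ (fun m => ?_) m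
        · simpa using hD
        · simpa using h1 m
      · rw [Fin.sum_univ_castSucc]
        simp only [Fin.snoc_castSucc, Fin.snoc_last]
        rw [← hB, ← sub_sub, ← hSS]
        have e : S * S - S * Pr * S = S * (1 - Pr) * S := by noncomm_ring
        rw [e]
        have := hP1.mul_mul_conjTranspose_same S
        rwa [hS] at this
      · intro m
        refine Fin.lastCases ?_ (fun m => ?_) m
        · simpa using hge.le
        · simpa using h3 m
      · intro m
        refine Fin.lastCases ?_ (fun m => ?_) m
        · simp only [Fin.snoc_last]
          refine le_trans ?_ hPt
          have e : (S * Pr * S).trace = (Pr * (1 - B)).trace := by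
            rw [Matrix.trace_mul_comm, ← Matrix.mul_assoc, hSS, Matrix.trace_mul_comm]
          rw [e]
          have := trace_mul_re_nonneg hP hBpsd
          rw [Matrix.mul_sub, Matrix.mul_one, Matrix.trace_sub, Complex.sub_re]
          linarith
        · simpa using h4 m
    rw [hPs] at hg
    have : (1 + t) * (ρ y * (S * Pr * S)).trace.re ≤ (1 + t) * (1 - lam) := by gcongr
    linarith
  have hTrB : B.trace.re ≤ k * (1 / τ) := by
    rw [hB, Matrix.trace_sum, Complex.re_sum]
    calc _ ≤ ∑ _m : Fin k, (1 / τ) := Finset.sum_le_sum fun m _ => h4 m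
      _ = _ := by simp
  have hσB : ∑ y, p y * (ρ y * B).trace.re = (σ * B).trace.re := by
    rw [hσp, Matrix.sum_mul, Matrix.trace_sum, Complex.re_sum]
    refine Finset.sum_congr rfl fun y _ => ?_
    rw [Matrix.smul_mul, Matrix.trace_smul, smul_eq_mul, Complex.re_ofReal_mul]
  have hσB2 : (σ * B).trace.re ≤ (∑ j, if s j ≤ θ then 0 else s j) + θ * (k * (1 / τ)) := by
    have : (σ * B).trace.re ≤ (∑ j, if s j ≤ θ then 0 else s j) + θ * B.trace.re := by
      rw [hσ.trace_mul, ← hσ.sum_conj, Finset.mul_sum, ← Finset.sum_add_distrib]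
      refine Finset.sum_le_sum fun j _ => ?_
      have b0 := psd_re (hBpsd.conjTranspose_mul_mul_same V) j
      have b1 := psd_re (h2.conjTranspose_mul_mul_same V) j
      rw [Matrix.mul_sub, Matrix.sub_mul, Matrix.mul_one, hσ.2.1, Matrix.sub_apply,
        Complex.sub_re, Matrix.one_apply_eq, Complex.one_re] at b1
      have := hs j
      split_ifs with hj
      · nlinarith
      · nlinarith
    refine this.trans ?_
    gcongr
  calc _ ≤ ∑ y, p y * ((1 + t) * (1 - lam) + (1 + 1 / t) * (ρ y * B).trace.re) :=
        Finset.sum_le_sum fun y _ => mul_le_mul_of_nonneg_left (hy y) (hp y)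
    _ = (1 + t) * (1 - lam) + (1 + 1 / t) * (σ * B).trace.re := by
        rw [← hσB]
        simp only [mul_add, Finset.sum_add_distrib, ← Finset.sum_mul, hp1, Finset.mul_sum]
        rw [one_mul]
        congr 1
        refine Finset.sum_congr rfl fun y _ => ?_
        ring
    _ ≤ _ := by gcongr

end ach

/-! ### Tensor powers -/

lemma tensorPow_mul {d n : ℕ} (A B : Fin n → Mat d) :
    tensorPow A * tensorPow B = tensorPow fun k => A k * B k := by
  ext i j
  simp only [tensorPow, Matrix.mul_apply, Matrix.of_apply, ← Finset.prod_mul_distrib]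
  rw [sum_prod_eq (fun k o => A k (i k) o * B k o (j k))]

lemma tensorPow_diagonal {d n : ℕ} (r : Fin n → Fin d → ℂ) :
    tensorPow (fun k => diagonal (r k)) = diagonal fun j : Fin n → Fin d => ∏ k, r k (j k) := by
  ext i j
  simp only [tensorPow, Matrix.of_apply]
  by_cases h : i = j
  · subst h; simp
  · rw [diagonal_apply_ne _ h]
    obtain ⟨k, hk⟩ := Function.ne_iff.mp h
    exact Finset.prod_eq_zero (Finset.mem_univ k) (diagonal_apply_ne _ hk)

lemma tensorPow_one {d n : ℕ} : tensorPow (fun _ : Fin n => (1 : Mat d)) = 1 := by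
  have := tensorPow_diagonal (d := d) (fun (_ : Fin n) _ => (1 : ℂ))
  simpa using this

lemma tensorPow_conjTranspose {d n : ℕ} (A : Fin n → Mat d) :
    (tensorPow A)ᴴ = tensorPow fun k => (A k)ᴴ := by
  ext i j
  simp [tensorPow, Matrix.conjTranspose_apply]

lemma diagBy_tensor {d n : ℕ} (A U : Fin n → Mat d) (r : Fin n → Fin d → ℝ)
    (h : ∀ k, DiagBy (A k) (U k) (r k)) :
    DiagBy (tensorPow A) (tensorPow U) (fun j => ∏ k, r k (j k)) := by
  refine ⟨?_, ?_, ?_⟩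
  · rw [tensorPow_conjTranspose, tensorPow_mul]
    simp only [(h _).1, tensorPow_one]
  · rw [tensorPow_conjTranspose, tensorPow_mul]
    simp only [(h _).2.1, tensorPow_one]
  · have := tensorPow_diagonal (fun k i => (r k i : ℂ))
    simp only [Complex.ofReal_prod]
    rw [← this, tensorPow_conjTranspose, tensorPow_mul, tensorPow_mul]
    congr 1
    funext k
    exact (h k).2.2

lemma tensorPow_avg {X : Type*} [Fintype X] {d n : ℕ} (P : X → ℝ) (W : X → Mat d) :
    tensorPow (fun _ : Fin n => avgState P W)
      = ∑ x : Fin n → X, ((∏ k, P (x k) : ℝ) : ℂ) • tensorPow (fun k => W (x k)) := by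
  ext i j
  simp only [tensorPow, avgState, Matrix.sum_apply, Matrix.smul_apply, Matrix.of_apply,
    smul_eq_mul, Complex.ofReal_prod, ← Finset.prod_mul_distrib]
  rw [sum_prod_eq (fun k x => (P x : ℂ) * W x (i k) (j k))]

lemma state_diag {d : ℕ} (ρ : Mat d) (h : IsState ρ) :
    ∃ (U : Mat d) (r : Fin d → ℝ), DiagBy ρ U r ∧ (∀ i, 0 ≤ r i) ∧ ∑ i, r i = 1 ∧
      vnEntropy ρ = -∑ i, r i * Real.logb 2 (r i) := by
  obtain ⟨U, hU⟩ := exists_diagBy ρ h.1.1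
  refine ⟨U, _, hU, h.1.eigenvalues_nonneg, ?_, ?_⟩
  · have := hU.trace
    have h3 := this.symm.trans h.2
    exact_mod_cast h3
  · unfold vnEntropy
    rw [dif_pos h.1.1]

lemma avg_isState {X : Type*} [Fintype X] {d : ℕ} (P : X → ℝ) (hP : IsProbDist P) (W : X → Mat d)
    (hW : ∀ x, IsState (W x)) : IsState (avgState P W) := by
  refine ⟨posSemidef_sum _ fun x _ => (hW x).1.smul (by exact_mod_cast hP.1 x), ?_⟩
  unfold avgState
  rw [Matrix.trace_sum]
  simp only [Matrix.trace_smul, (hW _).2, smul_eq_mul, mul_one]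
  exact_mod_cast hP.2

/-! ### The `n`-letter estimates -/

lemma sum_arrow_prod {A B : Type*} [Fintype A] [Fintype B] {n : ℕ} (F : (Fin n → A × B) → ℝ) :
    ∑ ω, F ω = ∑ i : Fin n → A, ∑ j : Fin n → B, F (fun k => (i k, j k)) := by
  rw [← Fintype.sum_prod_type']
  exact Fintype.sum_equiv (Equiv.arrowProdEquivProdArrow (Fin n) (fun _ => A) (fun _ => B)) _ _
    (fun ω => rfl)

lemma logb_prod' {n : ℕ} (r : Fin n → ℝ) (h : ∀ k, 0 < r k) :
    Real.logb 2 (∏ k, r k) = ∑ k, Real.logb 2 (r k) := by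
  unfold Real.logb
  rw [Real.log_prod (fun k _ => (h k).ne'), Finset.sum_div]

lemma prob_le_one {ι : Type*} [Fintype ι] {r : ι → ℝ} (hr : ∀ i, 0 ≤ r i) (h1 : ∑ i, r i = 1)
    (i : ι) : r i ≤ 1 := by
  rw [← h1]
  exact Finset.single_le_sum (f := r) (fun i _ => hr i) (Finset.mem_univ i)

lemma sum_logb_sq_le {d : ℕ} {r : Fin d → ℝ} (hr : ∀ i, 0 ≤ r i) (h1 : ∑ i, r i = 1) :
    ∑ i, r i * (Real.logb 2 (r i)) ^ 2 ≤ d * c0 := by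
  calc _ ≤ ∑ _i : Fin d, c0 :=
        Finset.sum_le_sum fun i _ => mul_logb_sq_le _ (hr i) (prob_le_one hr h1 i)
    _ = _ := by rw [Finset.sum_const, Finset.card_univ, Fintype.card_fin, nsmul_eq_mul]

lemma div_sq_helper (A κ : ℝ) (n : ℕ) (hn : 0 < n) :
    (n * A) / (κ * Real.sqrt n) ^ 2 = A / κ ^ 2 := by
  have : (0 : ℝ) < n := by exact_mod_cast hn
  rw [mul_pow, Real.sq_sqrt this.le, mul_comm (n : ℝ) A]
  exact mul_div_mul_right _ _ this.ne'

/-- Positive constant depending on the error. -/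
def eps (lam : ℝ) : ℝ := lam / (8 * (1 + 2 / lam))

lemma eps_pos {lam : ℝ} (h : 0 < lam) : 0 < eps lam := by unfold eps; positivity

lemma eps_le {lam : ℝ} (h : 0 < lam) : eps lam ≤ lam / 8 := by
  unfold eps
  have h2 : 0 < 2 / lam := by positivity
  apply div_le_div_of_nonneg_left h.le (by norm_num)
  linarith

lemma eps_eq {lam : ℝ} (h : 0 < lam) : (1 + 1 / (lam / 2)) * (2 * eps lam) = lam / 4 := by
  unfold eps
  have h2 : 0 < 2 / lam := by positivity
  have h3 : 1 / (lam / 2) = 2 / lam := by field_simp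
  rw [h3]
  field_simp
  ring

lemma ach_n {X : Type*} [Fintype X] {d n : ℕ} (hn : 0 < n) (W : X → Mat d)
    (hW : ∀ x, IsState (W x)) (P : X → ℝ) (hP : IsProbDist P) (lam κ : ℝ) (hl0 : 0 < lam)
    (hl1 : lam < 1) (hκ : 0 < κ) (hκ2 : d * c0 / κ ^ 2 ≤ eps lam) :
    ∃ (k : ℕ) (f : Fin k → Fin n → X) (D : Fin k → MatPow d n) (R : ℝ),
      GreedyCode (fun y : Fin n → X => tensorPow (fun i => W (y i))) lam R k f D ∧
      eps lam * (2 : ℝ) ^ (n * mutualInfo P W - 2 * κ * Real.sqrt n) ≤ k := by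
  choose U r hU hr hr1 hH using fun x => state_diag (W x) (hW x)
  obtain ⟨V, s, hV, hs, hs1, hHs⟩ := state_diag _ (avg_isState P hP W hW)
  have hn' : (0 : ℝ) < n := by exact_mod_cast hn
  have hc : 0 < κ * Real.sqrt n := mul_pos hκ (Real.sqrt_pos.mpr hn')
  set τ : ℝ := 2 ^ (-(n * condEntropy P W + κ * Real.sqrt n)) with hτ
  set θ : ℝ := 2 ^ (-(n * vnEntropy (avgState P W)) + κ * Real.sqrt n) with hθ
  have hτ0 : 0 < τ := Real.rpow_pos_of_pos (by norm_num) _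
  have hθ0 : 0 < θ := Real.rpow_pos_of_pos (by norm_num) _
  obtain ⟨k, f, D, hcode, hineq⟩ := oneshot_ach (fun y : Fin n → X => tensorPow (fun i => W (y i)))
    (fun y => tensorPow (fun i => U (y i))) (fun y j => ∏ i, r (y i) (j i))
    (fun y => diagBy_tensor _ _ _ fun i => hU (y i))
    (fun y j => Finset.prod_nonneg fun i _ => hr _ _)
    (fun y => sum_prod_one (fun i => r (y i)) (fun i => hr1 _))
    (fun y => ∏ i, P (y i)) (fun y => Finset.prod_nonneg fun i _ => hP.1 _)
    (sum_prod_one (fun _ => P) (fun _ => hP.2))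
    (diagBy_tensor (fun _ : Fin n => avgState P W) (fun _ => V) (fun _ => s) (fun _ => hV))
    (fun j => Finset.prod_nonneg fun i _ => hs _)
    (tensorPow_avg P W) (lam / 2) τ θ lam (by positivity) hτ0 hθ0 hl1
  refine ⟨k, f, D, _, hcode, ?_⟩
  -- first Chebyshev estimate
  have g1 : 1 - eps lam ≤ ∑ y : Fin n → X, (∏ i, P (y i)) *
      (∑ j : Fin n → Fin d, if τ ≤ ∏ i, r (y i) (j i) then ∏ i, r (y i) (j i) else 0) := by
    have h := cheb_good (n := n) (fun _ (o : X × Fin d) => P o.1 * r o.1 o.2)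
      (fun _ o => mul_nonneg (hP.1 _) (hr _ _))
      (fun _ => by
        rw [Fintype.sum_prod_type]
        simp only [← Finset.mul_sum, hr1, mul_one, hP.2])
      (fun _ o => - Real.logb 2 (r o.1 o.2)) (κ * Real.sqrt n) (n * (d * c0)) hc
      (by
        have : ∑ o : X × Fin d, P o.1 * r o.1 o.2 * (- Real.logb 2 (r o.1 o.2)) ^ 2 ≤ d * c0 := by
          rw [Fintype.sum_prod_type]
          simp only [neg_sq, mul_assoc, ← Finset.mul_sum]
          calc _ ≤ ∑ x, P x * (d * c0) := Finset.sum_le_sum fun x _ =>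
                mul_le_mul_of_nonneg_left (sum_logb_sq_le (hr x) (hr1 x)) (hP.1 x)
            _ = _ := by rw [← Finset.sum_mul, hP.2, one_mul]
        calc _ ≤ ∑ _k : Fin n, (d * c0 : ℝ) := Finset.sum_le_sum fun k _ => this
          _ = _ := by rw [Finset.sum_const, Finset.card_univ, Fintype.card_fin, nsmul_eq_mul])
      (fun ω => τ ≤ ∏ i, r (ω i).1 (ω i).2) ?_
    · rw [div_sq_helper _ _ _ hn, sum_arrow_prod] at h
      refine (by linarith : 1 - eps lam ≤ _).trans (h.trans (le_of_eq ?_))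
      refine Finset.sum_congr rfl fun y _ => ?_
      rw [Finset.mul_sum]
      refine Finset.sum_congr rfl fun j _ => ?_
      simp only [Finset.prod_mul_distrib, mul_ite, mul_zero]
    · intro ω hpos hsum
      have hrpos : ∀ i, 0 < r (ω i).1 (ω i).2 := fun i =>
        pos_of_mul_pos_right (hpos i) (hP.1 _)
      have hmean : ∑ o : X × Fin d, P o.1 * r o.1 o.2 * (- Real.logb 2 (r o.1 o.2))
          = condEntropy P W := by
        rw [Fintype.sum_prod_type, condEntropy]
        refine Finset.sum_congr rfl fun x _ => ?_
        rw [hH x, ← Finset.sum_neg_distrib, Finset.mul_sum]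
        refine Finset.sum_congr rfl fun i _ => ?_
        ring
      simp only [hmean] at hsum
      rw [Finset.sum_const, Finset.card_univ, Fintype.card_fin, nsmul_eq_mul,
        Finset.sum_neg_distrib, ← logb_prod' _ hrpos] at hsum
      rw [hτ, ← Real.le_logb_iff_rpow_le (by norm_num) (Finset.prod_pos fun i _ => hrpos i)]
      linarith
  -- second Chebyshev estimate
  have g2 : (∑ j : Fin n → Fin d, if ∏ i, s (j i) ≤ θ then 0 else ∏ i, s (j i)) ≤ eps lam := by
    have h := cheb_good (n := n) (fun _ (o : Fin d) => s o)
      (fun _ o => hs o) (fun _ => hs1)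
      (fun _ o => Real.logb 2 (s o)) (κ * Real.sqrt n) (n * (d * c0)) hc
      (by
        calc _ ≤ ∑ _k : Fin n, (d * c0 : ℝ) := Finset.sum_le_sum fun k _ => sum_logb_sq_le hs hs1
          _ = _ := by rw [Finset.sum_const, Finset.card_univ, Fintype.card_fin, nsmul_eq_mul])
      (fun ω => ∏ i, s (ω i) ≤ θ) ?_
    · rw [div_sq_helper _ _ _ hn] at h
      have h1 := sum_prod_one (n := n) (fun _ => s) (fun _ => hs1)
      have h2 : (∑ j : Fin n → Fin d, if ∏ i, s (j i) ≤ θ then 0 else ∏ i, s (j i))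
        = ∑ j : Fin n → Fin d, ∏ i, s (j i)
          - ∑ j : Fin n → Fin d, if ∏ i, s (j i) ≤ θ then ∏ i, s (j i) else 0 := by
        rw [← Finset.sum_sub_distrib]
        refine Finset.sum_congr rfl fun j _ => ?_
        split_ifs <;> simp
      rw [h2, h1]
      linarith
    · intro ω hpos hsum
      have hmean : ∑ o, s o * Real.logb 2 (s o) = - vnEntropy (avgState P W) := by
        rw [hHs, neg_neg]
      simp only [hmean] at hsum
      rw [Finset.sum_const, Finset.card_univ, Fintype.card_fin, nsmul_eq_mul,
        ← logb_prod' _ hpos] at hsum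
      rw [hθ, ← Real.logb_le_iff_le_rpow (by norm_num) (Finset.prod_pos fun i _ => hpos i)]
      linarith
  have ht : 0 < 1 + 1 / (lam / 2) := by positivity
  have h1 : lam / 4 ≤ (1 + 1 / (lam / 2)) * (eps lam + θ * (k * (1 / τ))) := by
    have := g1.trans hineq
    have h5 := mul_le_mul_of_nonneg_left (add_le_add_left g2 (θ * (k * (1 / τ)))) ht.le
    have h6 := eps_le hl0
    nlinarith
  rw [← eps_eq hl0] at h1
  have h2 := le_of_mul_le_mul_left h1 ht
  have h3 : eps lam * (τ / θ) ≤ k := by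
    have h4 : eps lam ≤ θ * (k * (1 / τ)) := by linarith
    rw [← mul_div_assoc, div_le_iff₀ hθ0]
    calc eps lam * τ ≤ θ * (k * (1 / τ)) * τ := by gcongr
      _ = k * θ := by field_simp
  have h4 : τ / θ = (2 : ℝ) ^ (n * mutualInfo P W - 2 * κ * Real.sqrt n) := by
    rw [hτ, hθ, ← Real.rpow_sub (by norm_num), mutualInfo]
    congr 1
    ring
  rwa [h4] at h3

lemma DiagBy.overlap {d : ℕ} {ρ U : Mat d} {r : Fin d → ℝ} (h : DiagBy ρ U r) (V : Mat d)
    (j : Fin d) : ((Vᴴ * ρ * V) j j).re = ∑ i, r i * ‖(Uᴴ * V) i j‖ ^ 2 := by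
  have e : Vᴴ * ρ * V = (Uᴴ * V)ᴴ * (diagonal (fun i => (r i : ℂ)) * (Uᴴ * V)) := by
    rw [h.2.2, conjTranspose_mul, conjTranspose_conjTranspose]
    simp only [Matrix.mul_assoc]
  rw [e, Matrix.mul_apply, Complex.re_sum]
  refine Finset.sum_congr rfl fun i _ => ?_
  rw [Matrix.conjTranspose_apply, Matrix.diagonal_mul, Complex.star_def,
    mul_left_comm, mul_comm ((starRingEnd ℂ) _), Complex.mul_conj, Complex.normSq_eq_norm_sq,
    ← Complex.ofReal_mul, Complex.ofReal_re]

lemma sum_comp_count {X : Type*} [Fintype X] {n : ℕ} (hn : 0 < n) (xs : Fin n → X) (g : X → ℝ) :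
    ∑ k, g (xs k) = n * ∑ x, ((countIn x xs : ℝ) / n) * g x := by
  have hn' : (n : ℝ) ≠ 0 := by exact_mod_cast hn.ne'
  rw [Finset.mul_sum]
  have : ∀ x, (n : ℝ) * (((countIn x xs : ℝ) / n) * g x) = ∑ k, if xs k = x then g x else 0 := by
    intro x
    rw [← Finset.sum_filter, Finset.sum_const, nsmul_eq_mul]
    unfold countIn
    field_simp
  simp_rw [this]
  rw [Finset.sum_comm]
  simp

lemma conv_n {X : Type*} [Fintype X] {d n : ℕ} (hn : 0 < n) (W : X → Mat d)
    (hW : ∀ x, IsState (W x)) (P : X → ℝ) (hP : IsProbDist P) (xs : Fin n → X)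
    (hPx : ∀ x, P x = (countIn x xs : ℝ) / n) (lam κ : ℝ)
    (hl1 : lam < 1) (hκ : 0 < κ) (hκ2 : 4 * d * c0 / κ ^ 2 ≤ eps (1 - lam)) (T : MatPow d n)
    (hT : T.PosSemidef) (hT1 : (1 - T).PosSemidef)
    (hsucc : 1 - lam ≤ (tensorPow (fun i => W (xs i)) * T).trace.re) :
    eps (1 - lam) ≤ (2 : ℝ) ^ (n * mutualInfo P W + κ * Real.sqrt n) *
      (tensorPow (fun _ : Fin n => avgState P W) * T).trace.re := by
  choose U r hU hr hr1 hH using fun x => state_diag (W x) (hW x)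
  obtain ⟨V, s, hV, hs, hs1, hHs⟩ := state_diag _ (avg_isState P hP W hW)
  have hn' : (0 : ℝ) < n := by exact_mod_cast hn
  have hc : 0 < κ * Real.sqrt n := mul_pos hκ (Real.sqrt_pos.mpr hn')
  set L : ℝ := 2 ^ (n * mutualInfo P W + κ * Real.sqrt n) with hL
  have hL0 : 0 < L := Real.rpow_pos_of_pos (by norm_num) _
  have hcount : ∀ g : X → ℝ, ∑ k, g (xs k) = n * ∑ x, P x * g x := by
    intro g
    rw [sum_comp_count hn]
    simp only [hPx]
  have hPpos : ∀ k, 0 < P (xs k) := by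
    intro k
    rw [hPx]
    refine div_pos ?_ hn'
    have : 0 < countIn (xs k) xs := Finset.card_pos.mpr ⟨k, by simp⟩
    exact_mod_cast this
  -- overlaps
  set G : X → Fin d → Fin d → ℝ := fun x i j => ‖((U x)ᴴ * V) i j‖ ^ 2 with hG
  have hG0 : ∀ x i j, 0 ≤ G x i j := fun x i j => sq_nonneg _
  have hGrow : ∀ x i, ∑ j, G x i j = 1 := by
    intro x i
    simp only [hG]
    rw [sum_normSq_row]
    have : ((U x)ᴴ * V) * ((U x)ᴴ * V)ᴴ = 1 := by
      rw [conjTranspose_mul, conjTranspose_conjTranspose]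
      calc _ = (U x)ᴴ * (V * Vᴴ) * U x := by simp only [Matrix.mul_assoc]
        _ = _ := by rw [hV.1, Matrix.mul_one, (hU x).2.1]
    rw [this]; simp
  have hsG : ∀ j, s j = ∑ x, P x * ∑ i, r x i * G x i j := by
    intro j
    have h1 : ((Vᴴ * avgState P W * V) j j).re = s j := by
      have : Vᴴ * avgState P W * V = diagonal (fun i => (s i : ℂ)) := by
        rw [hV.2.2]
        calc _ = (Vᴴ * V) * diagonal (fun i => (s i : ℂ)) * (Vᴴ * V) := by
              simp only [Matrix.mul_assoc]
          _ = _ := by rw [hV.2.1]; simp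
      rw [this, diagonal_apply_eq, Complex.ofReal_re]
    rw [← h1]
    unfold avgState
    rw [Matrix.mul_sum, Matrix.sum_mul, Matrix.sum_apply, Complex.re_sum]
    refine Finset.sum_congr rfl fun x _ => ?_
    rw [Matrix.mul_smul, Matrix.smul_mul, Matrix.smul_apply, smul_eq_mul, Complex.re_ofReal_mul,
      (hU x).overlap V j]
  have hswap : ∀ (x : X) (g : Fin d → ℝ), ∑ i, ∑ j, r x i * G x i j * g j
      = ∑ j, (∑ i, r x i * G x i j) * g j := by
    intro x g
    rw [Finset.sum_comm]
    simp only [Finset.sum_mul]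
  have hrow : ∀ (x : X) (g : Fin d → ℝ), ∑ i, ∑ j, r x i * G x i j * g i
      = ∑ i, r x i * g i := by
    intro x g
    refine Finset.sum_congr rfl fun i _ => ?_
    rw [← Finset.sum_mul, ← Finset.mul_sum, hGrow, mul_one]
  have havg : ∀ g : Fin d → ℝ, ∑ x, P x * ∑ j, (∑ i, r x i * G x i j) * g j
      = ∑ j, s j * g j := by
    intro g
    simp only [Finset.mul_sum]
    rw [Finset.sum_comm]
    refine Finset.sum_congr rfl fun j _ => ?_
    rw [hsG j, Finset.sum_mul]
    refine Finset.sum_congr rfl fun x _ => ?_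
    ring
  have g1 : 1 - eps (1 - lam) ≤ ∑ i : Fin n → Fin d, ∑ j : Fin n → Fin d,
      (if ∏ k, r (xs k) (i k) ≤ L * ∏ k, s (j k) then
        (∏ k, r (xs k) (i k)) *
          ‖((tensorPow fun k => U (xs k))ᴴ * tensorPow (fun _ : Fin n => V)) i j‖ ^ 2 else 0) := by
    have h := cheb_good (n := n)
      (fun k (o : Fin d × Fin d) => r (xs k) o.1 * G (xs k) o.1 o.2)
      (fun k o => mul_nonneg (hr _ _) (hG0 _ _ _))
      (fun k => by
        rw [Fintype.sum_prod_type]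
        simp only [← Finset.mul_sum, hGrow, mul_one, hr1])
      (fun k o => Real.logb 2 (r (xs k) o.1) - Real.logb 2 (s o.2)) (κ * Real.sqrt n)
      (n * (4 * d * c0)) hc
      (by
        have hx : ∀ x, ∑ o : Fin d × Fin d, r x o.1 * G x o.1 o.2 *
            (Real.logb 2 (r x o.1) - Real.logb 2 (s o.2)) ^ 2
            ≤ 2 * (d * c0) + 2 * ∑ j, (∑ i, r x i * G x i j) * (Real.logb 2 (s j)) ^ 2 := by
          intro x
          rw [Fintype.sum_prod_type]
          calc _ ≤ ∑ i, ∑ j, (2 * (r x i * G x i j * (Real.logb 2 (r x i)) ^ 2)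
                + 2 * (r x i * G x i j * (Real.logb 2 (s j)) ^ 2)) := by
                refine Finset.sum_le_sum fun i _ => Finset.sum_le_sum fun j _ => ?_
                have h0 : 0 ≤ r x i * G x i j := mul_nonneg (hr _ _) (hG0 _ _ _)
                have h1 := mul_nonneg h0
                  (sq_nonneg (Real.logb 2 (r x i) + Real.logb 2 (s j)))
                dsimp only
                nlinarith
            _ = 2 * ∑ i, r x i * (Real.logb 2 (r x i)) ^ 2
                + 2 * ∑ j, (∑ i, r x i * G x i j) * (Real.logb 2 (s j)) ^ 2 := by
                simp only [Finset.sum_add_distrib, ← Finset.mul_sum]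
                rw [hrow x (fun i => (Real.logb 2 (r x i)) ^ 2),
                  hswap x (fun j => (Real.logb 2 (s j)) ^ 2)]
            _ ≤ _ := by
                have := sum_logb_sq_le (hr x) (hr1 x)
                linarith
        calc _ ≤ ∑ k, (2 * (d * c0) +
              2 * ∑ j, (∑ i, r (xs k) i * G (xs k) i j) * (Real.logb 2 (s j)) ^ 2) :=
              Finset.sum_le_sum fun k _ => hx (xs k)
          _ = n * (2 * (d * c0) + 2 * ∑ j, s j * (Real.logb 2 (s j)) ^ 2) := by
              rw [hcount (fun x => 2 * (d * c0) +
                2 * ∑ j, (∑ i, r x i * G x i j) * (Real.logb 2 (s j)) ^ 2)]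
              rw [← havg (fun j => (Real.logb 2 (s j)) ^ 2)]
              simp only [mul_add, Finset.sum_add_distrib, ← Finset.sum_mul, hP.2, one_mul]
              congr 2
              rw [Finset.mul_sum]
              refine Finset.sum_congr rfl fun x _ => ?_
              ring
          _ ≤ _ := by
              have := sum_logb_sq_le hs hs1
              refine mul_le_mul_of_nonneg_left ?_ hn'.le
              linarith)
      (fun ω => ∏ k, r (xs k) (ω k).1 ≤ L * ∏ k, s (ω k).2) ?_
    · rw [div_sq_helper _ _ _ hn, sum_arrow_prod] at h
      refine (by linarith : 1 - eps (1 - lam) ≤ _).trans (h.trans (le_of_eq ?_))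
      refine Finset.sum_congr rfl fun i _ => Finset.sum_congr rfl fun j _ => ?_
      have : ‖((tensorPow fun k => U (xs k))ᴴ * tensorPow (fun _ : Fin n => V)) i j‖ ^ 2
          = ∏ k, G (xs k) (i k) (j k) := by
        rw [tensorPow_conjTranspose, tensorPow_mul]
        simp only [tensorPow, Matrix.of_apply, hG]
        rw [norm_prod, Finset.prod_pow]
      rw [this]
      simp only [Finset.prod_mul_distrib]
    · intro ω hpos hsum
      have hrpos : ∀ k, 0 < r (xs k) (ω k).1 := fun k =>
        pos_of_mul_pos_left (hpos k) (hG0 _ _ _)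
      have hspos : ∀ k, 0 < s (ω k).2 := by
        intro k
        rw [hsG]
        refine lt_of_lt_of_le (mul_pos (hPpos k) (hpos k)) ?_
        refine le_trans ?_ (Finset.single_le_sum
          (f := fun x => P x * ∑ i, r x i * G x i (ω k).2)
          (fun x _ => mul_nonneg (hP.1 x)
            (Finset.sum_nonneg fun i _ => mul_nonneg (hr _ _) (hG0 _ _ _)))
          (Finset.mem_univ (xs k)))
        refine mul_le_mul_of_nonneg_left ?_ (hP.1 _)
        exact Finset.single_le_sum (f := fun i => r (xs k) i * G (xs k) i (ω k).2)
          (fun i _ => mul_nonneg (hr _ _) (hG0 _ _ _)) (Finset.mem_univ (ω k).1)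
      have hmean : ∑ k, ∑ o : Fin d × Fin d, r (xs k) o.1 * G (xs k) o.1 o.2 *
          (Real.logb 2 (r (xs k) o.1) - Real.logb 2 (s o.2)) = n * mutualInfo P W := by
        have hx : ∀ x, ∑ o : Fin d × Fin d, r x o.1 * G x o.1 o.2 *
            (Real.logb 2 (r x o.1) - Real.logb 2 (s o.2))
            = - vnEntropy (W x) - ∑ j, (∑ i, r x i * G x i j) * Real.logb 2 (s j) := by
          intro x
          rw [Fintype.sum_prod_type]
          simp only [mul_sub, Finset.sum_sub_distrib]
          rw [hrow x (fun i => Real.logb 2 (r x i)), hswap x (fun j => Real.logb 2 (s j)), hH x,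
            neg_neg]
        simp only [hx]
        rw [hcount (fun x => - vnEntropy (W x) - ∑ j, (∑ i, r x i * G x i j) * Real.logb 2 (s j))]
        simp only [mul_sub, Finset.sum_sub_distrib]
        rw [havg (fun j => Real.logb 2 (s j)), mutualInfo, condEntropy, hHs]
        simp only [mul_neg, Finset.sum_neg_distrib]
        ring
      rw [hmean, Finset.sum_sub_distrib, ← logb_prod' _ hrpos, ← logb_prod' _ hspos] at hsum
      have hsp : 0 < ∏ k, s (ω k).2 := Finset.prod_pos fun i _ => hspos i
      have hrp : 0 < ∏ k, r (xs k) (ω k).1 := Finset.prod_pos fun i _ => hrpos i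
      rw [← Real.logb_div hrp.ne' hsp.ne',
        Real.logb_le_iff_le_rpow (by norm_num) (div_pos hrp hsp), div_le_iff₀ hsp] at hsum
      exact hsum
  set μ := 1 - lam with hμ
  have hμ0 : 0 < μ := by rw [hμ]; linarith
  have h2 := g1.trans (oneshot_converse (diagBy_tensor _ _ _ fun i => hU (xs i))
    (diagBy_tensor (fun _ : Fin n => avgState P W) (fun _ => V) (fun _ => s) (fun _ => hV))
    (fun j => Finset.prod_nonneg fun i _ => hr _ _) (fun j => Finset.prod_nonneg fun i _ => hs _)
    hT hT1 (μ / 2) L (by positivity) hL0)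
  set β := (tensorPow (fun _ : Fin n => avgState P W) * T).trace.re with hβ
  have h3 : (tensorPow (fun i => W (xs i)) * (1 - T)).trace.re ≤ 1 - μ := by
    rw [Matrix.mul_sub, Matrix.mul_one, Matrix.trace_sub, Complex.sub_re]
    have : (tensorPow (fun i => W (xs i))).trace.re = 1 := by
      rw [(diagBy_tensor _ _ _ fun i => hU (xs i)).trace, Complex.ofReal_re]
      exact sum_prod_one (fun i => r (xs i)) (fun i => hr1 _)
    linarith
  have ht : 0 < 1 + 1 / (μ / 2) := by positivity
  have h4 := mul_le_mul_of_nonneg_left h3 (by positivity : 0 ≤ 1 + μ / 2)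
  have h5 := eps_le hμ0
  have h6 : μ / 4 ≤ (1 + 1 / (μ / 2)) * (L * β) := by nlinarith
  rw [← eps_eq hμ0] at h6
  have h7 := le_of_mul_le_mul_left h6 ht
  linarith [eps_pos hμ0]

/-! ### Assembling the theorem -/

lemma vnEntropy_le {d : ℕ} (ρ : Mat d) (h : IsState ρ) :
    0 ≤ vnEntropy ρ ∧ vnEntropy ρ ≤ d * (c0 + 1) := by
  obtain ⟨U, r, -, hr, hr1, hH⟩ := state_diag ρ h
  rw [hH, ← Finset.sum_neg_distrib]
  constructor
  · refine Finset.sum_nonneg fun i _ => ?_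
    have h1 := prob_le_one hr hr1 i
    have h2 := Real.logb_nonpos (b := 2) (by norm_num) (hr i) h1
    nlinarith [hr i]
  · calc _ ≤ ∑ _i : Fin d, (c0 + 1) := by
          refine Finset.sum_le_sum fun i _ => ?_
          have h1 := prob_le_one hr hr1 i
          have h2 := mul_logb_sq_le _ (hr i) h1
          have h3 := mul_nonneg (hr i) (sq_nonneg (Real.logb 2 (r i) + 1 / 2))
          nlinarith [hr i]
      _ = _ := by rw [Finset.sum_const, Finset.card_univ, Fintype.card_fin, nsmul_eq_mul]

lemma capacity_bdd {X : Type*} [Fintype X] {d : ℕ} (W : X → Mat d) (hW : ∀ x, IsState (W x)) :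
    BddAbove {c | ∃ P : X → ℝ, IsProbDist P ∧ c = mutualInfo P W} := by
  refine ⟨d * (c0 + 1), ?_⟩
  rintro c ⟨P, hP, rfl⟩
  have h1 := (vnEntropy_le _ (avg_isState P hP W hW)).2
  have h2 : 0 ≤ condEntropy P W :=
    Finset.sum_nonneg fun x _ => mul_nonneg (hP.1 x) (vnEntropy_le _ (hW x)).1
  unfold mutualInfo
  linarith

lemma count_isProbDist {X : Type*} [Fintype X] {n : ℕ} (hn : 0 < n) (xs : Fin n → X) :
    IsProbDist (fun x => (countIn x xs : ℝ) / n) := by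
  have hn' : (0 : ℝ) < n := by exact_mod_cast hn
  refine ⟨fun x => by positivity, ?_⟩
  have h := sum_comp_count hn xs (fun _ => 1)
  simp only [mul_one, Finset.sum_const, Finset.card_univ, Fintype.card_fin, nsmul_eq_mul] at h
  have : (n : ℝ) * 1 = n * ∑ x, (countIn x xs : ℝ) / n := by linarith
  exact (mul_left_cancel₀ hn'.ne' this).symm

/-- Upper bound for the size of every code. -/
lemma code_card_le {X : Type*} [Fintype X] {d n : ℕ} (hn : 0 < n) (W : X → Mat d)
    (hW : ∀ x, IsState (W x)) (lam κ : ℝ)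
    (hl1 : lam < 1) (hκ : 0 < κ) (hκ2 : 4 * d * c0 / κ ^ 2 ≤ eps (1 - lam))
    {M' : Type*} [Fintype M'] (M : Finset M') (f : M' → Fin n → X) (D : M' → MatPow d n)
    (h : IsCode W lam M f D) :
    (M.card : ℝ) ≤ ((n : ℝ) + 1) ^ (Fintype.card X) *
      ((2 : ℝ) ^ (n * capacity W + κ * Real.sqrt n) / eps (1 - lam)) := by
  obtain ⟨hD, hD1, hs⟩ := h
  have hε : 0 < eps (1 - lam) := eps_pos (by linarith)
  have hDle : ∀ m, (1 - D m).PosSemidef := by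
    intro m
    rw [← hD1, ← Finset.add_sum_erase _ _ (Finset.mem_univ m), add_sub_cancel_left]
    exact posSemidef_sum _ fun m _ => hD m
  set ty : M' → (X → Fin (n + 1)) := fun m x => ⟨countIn x (f m), by
    have : countIn x (f m) ≤ n := by
      refine (Finset.card_filter_le _ _).trans ?_
      simp
    omega⟩ with hty
  have hfib : ∀ q : X → Fin (n + 1), ((M.filter fun m => ty m = q).card : ℝ) ≤
      (2 : ℝ) ^ (n * capacity W + κ * Real.sqrt n) / eps (1 - lam) := by
    intro q
    rcases (M.filter fun m => ty m = q).eq_empty_or_nonempty with he | ⟨m0, hm0⟩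
    · rw [he]; simp; positivity
    have hq0 : ty m0 = q := (Finset.mem_filter.mp hm0).2
    set P : X → ℝ := fun x => (countIn x (f m0) : ℝ) / n with hPdef
    have hP : IsProbDist P := count_isProbDist hn (f m0)
    have hcap : mutualInfo P W ≤ capacity W := le_csSup (capacity_bdd W hW) ⟨P, hP, rfl⟩
    set L : ℝ := 2 ^ (n * mutualInfo P W + κ * Real.sqrt n) with hL
    have hL0 : 0 < L := Real.rpow_pos_of_pos (by norm_num) _
    have hLle : L ≤ 2 ^ (n * capacity W + κ * Real.sqrt n) := by
      rw [hL]
      refine Real.rpow_le_rpow_of_exponent_le (by norm_num) ?_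
      gcongr
    have hm : ∀ m ∈ M.filter fun m => ty m = q, eps (1 - lam) ≤ L *
        (tensorPow (fun _ : Fin n => avgState P W) * D m).trace.re := by
      intro m hm
      obtain ⟨hmM, hmq⟩ := Finset.mem_filter.mp hm
      refine conv_n hn W hW P hP (f m) ?_ lam κ hl1 hκ hκ2 (D m) (hD m) (hDle m) (hs m hmM)
      intro x
      have : countIn x (f m0) = countIn x (f m) := by
        have := congrFun (hq0.trans hmq.symm) x
        simpa [hty] using this
      simp only [hPdef, this]
    obtain ⟨V, s, hV, hs0, hs1, -⟩ := state_diag _ (avg_isState P hP W hW)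
    have hσ := diagBy_tensor (fun _ : Fin n => avgState P W) (fun _ => V) (fun _ => s) (fun _ => hV)
    have hσpsd := hσ.posSemidef (fun j => Finset.prod_nonneg fun i _ => hs0 _)
    have hσtr : (tensorPow (fun _ : Fin n => avgState P W)).trace.re = 1 := by
      rw [hσ.trace, Complex.ofReal_re]
      exact sum_prod_one (fun _ => s) (fun _ => hs1)
    have htot : ∑ m ∈ M.filter (fun m => ty m = q),
        (tensorPow (fun _ : Fin n => avgState P W) * D m).trace.re ≤ 1 := by
      calc _ ≤ ∑ m, (tensorPow (fun _ : Fin n => avgState P W) * D m).trace.re :=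
            Finset.sum_le_sum_of_subset_of_nonneg (Finset.subset_univ _)
              (fun m _ _ => trace_mul_re_nonneg hσpsd (hD m))
        _ = 1 := by
            rw [← Complex.re_sum, ← Matrix.trace_sum, ← Matrix.mul_sum, hD1, Matrix.mul_one, hσtr]
    rw [le_div_iff₀ hε]
    calc _ = ∑ _m ∈ M.filter (fun m => ty m = q), eps (1 - lam) := by
          rw [Finset.sum_const, nsmul_eq_mul]
      _ ≤ ∑ m ∈ M.filter (fun m => ty m = q), L *
        (tensorPow (fun _ : Fin n => avgState P W) * D m).trace.re := Finset.sum_le_sum hm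
      _ ≤ L * 1 := by rw [← Finset.mul_sum]; gcongr
      _ ≤ _ := by rw [mul_one]; exact hLle
  rw [Finset.card_eq_sum_card_fiberwise (f := ty) (t := Finset.univ) (fun m _ => Finset.mem_univ _)]
  push_cast
  calc _ ≤ ∑ _q : X → Fin (n + 1),
        (2 : ℝ) ^ (n * capacity W + κ * Real.sqrt n) / eps (1 - lam) :=
        Finset.sum_le_sum fun q _ => hfib q
    _ = _ := by
      rw [Finset.sum_const, Finset.card_univ, nsmul_eq_mul]
      simp

lemma logb_succ_le (n : ℕ) (hn : 0 < n) :
    Real.logb 2 ((n : ℝ) + 1) ≤ 4 / Real.log 2 * Real.sqrt n := by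
  have hl := Real.log_pos (show (1:ℝ) < 2 by norm_num)
  have hn' : (1 : ℝ) ≤ n := by exact_mod_cast hn
  unfold Real.logb
  rw [div_mul_eq_mul_div]
  gcongr
  have h1 : Real.log ((n : ℝ) + 1) ≤ 2 * Real.sqrt ((n : ℝ) + 1) := by
    have h2 := Real.log_le_self (Real.sqrt_nonneg ((n : ℝ) + 1))
    rw [Real.log_sqrt (by positivity)] at h2
    linarith
  have h3 : Real.sqrt ((n : ℝ) + 1) ≤ 2 * Real.sqrt n := by
    rw [Real.sqrt_le_left (by positivity), mul_pow, Real.sq_sqrt (by positivity)]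
    linarith
  linarith

/-- A greedy code gives a code in the sense of `IsCode`. -/
lemma exists_code_of_greedy {X : Type*} [Fintype X] {d n : ℕ} (x0 : X) (W : X → Mat d)
    (lam R : ℝ) (k : ℕ) (f : Fin k → Fin n → X) (D : Fin k → MatPow d n)
    (h : GreedyCode (fun y : Fin n → X => tensorPow (fun i => W (y i))) lam R k f D) :
    ∃ (M' : Type) (_ : Fintype M') (M : Finset M') (f : M' → Fin n → X)
    (D : M' → MatPow d n), IsCode W lam M f D ∧ M.card = k := by
  obtain ⟨h1, h2, h3, -⟩ := h
  refine ⟨Option (Fin k), inferInstance, Finset.univ.map Function.Embedding.some,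
    fun o => o.elim (fun _ => x0) f, fun o => o.elim (1 - ∑ m, D m) D, ⟨?_, ?_, ?_⟩, ?_⟩
  · intro m
    cases m with
    | none => exact h2
    | some m => exact h1 m
  · rw [Fintype.sum_option]
    simp
  · intro m hm
    obtain ⟨m, -, rfl⟩ := Finset.mem_map.mp hm
    exact h3 m
  · simp

/-- **Theorem 1 (Coding theorem and strong converse).** For every `λ ∈ (0,1)` there is
a constant `K(λ,a,d)` such that for all cq-DMCs `W` (with input alphabet of size `a`
and output states on `ℂ^d`) and all positive integers `n`,
`|log₂ N(n,λ) − n C(W)| ≤ K √n`. -/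
theorem coding_theorem_and_strong_converse (a d : ℕ) (lam : ℝ)
    (hlam : lam ∈ Set.Ioo (0 : ℝ) 1) :
    ∃ K : ℝ, ∀ (X : Type) [Fintype X], Fintype.card X = a →
      ∀ W : X → Mat d, (∀ x, IsState (W x)) →
        ∀ n : ℕ, 0 < n →
          |Real.logb 2 (maxCodeSize d W n lam) - n * capacity W| ≤ K * Real.sqrt n := by
  have hl0 := hlam.1
  have hl1 := hlam.2
  set e1 := eps lam with he1
  set e2 := eps (1 - lam) with he2
  have he1p : 0 < e1 := eps_pos hl0
  have he2p : 0 < e2 := eps_pos (by linarith)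
  set κ : ℝ := Real.sqrt (4 * d * c0 / min e1 e2 + 1) with hκ
  have hc0 := c0_pos
  have hmin : 0 < min e1 e2 := lt_min he1p he2p
  have hκp : 0 < κ := Real.sqrt_pos.mpr (by positivity)
  have hκsq : κ ^ 2 = 4 * d * c0 / min e1 e2 + 1 := Real.sq_sqrt (by positivity)
  have hκm : 4 * d * c0 / κ ^ 2 ≤ min e1 e2 := by
    rw [div_le_iff₀ (by positivity), hκsq, mul_add, mul_div_cancel₀ _ hmin.ne']
    linarith
  have hκ1 : d * c0 / κ ^ 2 ≤ e1 := by
    refine le_trans ?_ (hκm.trans (min_le_left _ _))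
    have : (0 : ℝ) ≤ d * c0 := by positivity
    gcongr
    linarith
  have hκ2 : 4 * d * c0 / κ ^ 2 ≤ e2 := hκm.trans (min_le_right _ _)
  have hl2 := Real.log_pos (show (1:ℝ) < 2 by norm_num)
  refine ⟨a * (4 / Real.log 2) + 2 * κ + |Real.logb 2 e1| + |Real.logb 2 e2|, ?_⟩
  intro X _ hX W hW n hn
  have hn1 : (1 : ℝ) ≤ n := by exact_mod_cast hn
  have hsn : 1 ≤ Real.sqrt n := Real.one_le_sqrt.mpr hn1
  have hA1 : |Real.logb 2 e1| ≤ |Real.logb 2 e1| * Real.sqrt n :=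
    le_mul_of_one_le_right (abs_nonneg _) hsn
  have hA2 : |Real.logb 2 e2| ≤ |Real.logb 2 e2| * Real.sqrt n :=
    le_mul_of_one_le_right (abs_nonneg _) hsn
  have hA3 : 0 ≤ a * (4 / Real.log 2) * Real.sqrt n := by positivity
  have hA4 : 0 ≤ κ * Real.sqrt n := by positivity
  rcases isEmpty_or_nonempty X with hemp | ⟨⟨x0⟩⟩
  · have hC : capacity W = 0 := by
      unfold capacity
      rw [show {c | ∃ P : X → ℝ, IsProbDist P ∧ c = mutualInfo P W} = ∅ by
        ext c
        simp only [Set.mem_ofPred_eq, Set.mem_empty_iff_false, iff_false]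
        rintro ⟨P, hP, -⟩
        have := hP.2
        simp at this]
      exact Real.sSup_empty
    have hN : maxCodeSize d W n lam = 0 := by
      unfold maxCodeSize
      refine Nat.le_zero.mp (csSup_le' ?_)
      rintro k ⟨M', _, M, f, D, -, rfl⟩
      have : IsEmpty M' := ⟨fun m => hemp.elim (f m ⟨0, hn⟩)⟩
      exact (Finset.card_eq_zero.mpr (Finset.eq_empty_of_isEmpty M)).le
    rw [hC, hN]
    simp only [Nat.cast_zero, Real.logb_zero, mul_zero, sub_zero, abs_zero]
    positivity
  set S : Set ℕ := {k | ∃ (M' : Type) (_ : Fintype M') (M : Finset M') (f : M' → Fin n → X)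
    (D : M' → MatPow d n), IsCode W lam M f D ∧ M.card = k} with hS
  have hNS : maxCodeSize d W n lam = sSup S := rfl
  set Bd : ℝ := ((n : ℝ) + 1) ^ (Fintype.card X) *
      ((2 : ℝ) ^ (n * capacity W + κ * Real.sqrt n) / e2) with hBd
  have hSB : ∀ k ∈ S, (k : ℝ) ≤ Bd := by
    rintro k ⟨M', _, M, f, D, hcode, rfl⟩
    exact code_card_le hn W hW lam κ hl1 hκp hκ2 M f D hcode
  have hbdd : BddAbove S := ⟨⌊Bd⌋₊, fun k hk => Nat.le_floor (hSB k hk)⟩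
  have hlow : ∀ P : X → ℝ, IsProbDist P →
      e1 * (2 : ℝ) ^ (n * mutualInfo P W - 2 * κ * Real.sqrt n) ≤ (sSup S : ℕ) := by
    intro P hP
    obtain ⟨k, f, D, R, hg, hk⟩ := ach_n hn W hW P hP lam κ hl0 hl1 hκp hκ1
    have hkS : k ∈ S := exists_code_of_greedy x0 W lam R k f D hg
    have : k ≤ sSup S := le_csSup hbdd hkS
    exact hk.trans (by exact_mod_cast this)
  have hP0 : IsProbDist (fun x : X => if x = x0 then (1 : ℝ) else 0) :=
    ⟨fun x => by dsimp only; split_ifs <;> norm_num, by simp⟩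
  have hNpos : (0 : ℝ) < (sSup S : ℕ) := lt_of_lt_of_le (by positivity) (hlow _ hP0)
  have hSne : S.Nonempty := by
    obtain ⟨k, f, D, R, hg, -⟩ := ach_n hn W hW _ hP0 lam κ hl0 hl1 hκp hκ1
    exact ⟨k, exists_code_of_greedy x0 W lam R k f D hg⟩
  have hup : ((sSup S : ℕ) : ℝ) ≤ Bd := hSB _ (Nat.sSup_mem hSne hbdd)
  rw [hNS, abs_le]
  constructor
  · have hcap : n * capacity W ≤
        Real.logb 2 (sSup S : ℕ) - Real.logb 2 e1 + 2 * κ * Real.sqrt n := by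
      have hn0 : (0 : ℝ) < n := by linarith
      rw [mul_comm, ← le_div_iff₀ hn0]
      refine csSup_le ⟨_, _, hP0, rfl⟩ ?_
      rintro c ⟨P, hP, rfl⟩
      rw [le_div_iff₀ hn0, mul_comm]
      have h1 := Real.logb_le_logb_of_le (b := 2) (by norm_num) (by positivity) (hlow P hP)
      rw [Real.logb_mul he1p.ne' (by positivity),
        Real.logb_rpow (by norm_num) (by norm_num)] at h1
      linarith
    have h3 := neg_abs_le (Real.logb 2 e1)
    nlinarith [abs_nonneg (Real.logb 2 e2)]
  · have h1 := Real.logb_le_logb_of_le (b := 2) (by norm_num) hNpos hup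
    rw [hBd, Real.logb_mul (by positivity) (by positivity),
      Real.logb_div (by positivity) he2p.ne',
      Real.logb_rpow (by norm_num) (by norm_num), Real.logb_pow, hX] at h1
    have h2 : (a : ℝ) * Real.logb 2 ((n : ℝ) + 1) ≤ a * (4 / Real.log 2 * Real.sqrt n) :=
      mul_le_mul_of_nonneg_left (logb_succ_le n hn) (by positivity)
    have h3 := neg_abs_le (Real.logb 2 e2)
    nlinarith [abs_nonneg (Real.logb 2 e1)]
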